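/- arXiv:1001.0436 — 2 statements merged into one kernel-verified Lean document; each statement's English description precedes it below -/
import Mathlib

section
/- Fix numbers of jobs n and machines m, values v : Fin n × Fin m → ℝ with v ≥ 0, sizes s : Fin n → ℝ with s > 0, and capacities c : Fin m → ℝ with c ≥ 0. There exists a map A from edge sets E ⊆ Fin n × Fin m to finitely supported probability distributions over assignments x : Fin n → Option (Fin m) such that: (i) every assignment in the support of A(E) is feasible for SIGAP[E]; (ii) A is truthful in expectation: for every E, every job i, and every set E'_i of pairs with first coordinate i, letting E' = (E \ E_i) ∪ E'_i, the expected value ∑_{j : (i,j) ∈ E, x(i) = some j} v(i,j) under A(E) is at least that under A(E'); and (iii) for every E, 4 · E_{x ~ A(E)}[welfare(x)] ≥ the maximum welfare of a feasible assignment for SIGAP[E]. That is, there is a 4-approximate mechanism without money for the size-invariant generalized assignment problem that is truthful-in-expectation in the private graph model. -/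
/-- Feasibility of an assignment for SIGAP[E] (machine-independent sizes). -/
def SIGAPFeasible {n m : ℕ} (s : Fin n → ℝ) (c : Fin m → ℝ)
    (E : Finset (Fin n × Fin m)) (x : Fin n → Option (Fin m)) : Prop :=
  (∀ i j, x i = some j → (i, j) ∈ E) ∧
    ∀ j, ∑ i ∈ Finset.univ.filter (fun i => x i = some j), s i ≤ c j

/-- Welfare of an assignment in SIGAP: assigned job `i` contributes `v (i,j)`. -/
def SIGAPWelfare {n m : ℕ} (v : Fin n × Fin m → ℝ) (x : Fin n → Option (Fin m)) : ℝ :=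
  ∑ i, ∑ j ∈ Finset.univ.filter (fun j => x i = some j), v (i, j)

namespace SG
open Finset

/-- Amount taken by the greedy on edge `e`. -/
noncomputable def amt {n m : ℕ} (E : Finset (Fin n × Fin m)) (e : Fin n × Fin m)
    (p : Fin n → ℝ) (q : Fin m → ℝ) : ℝ :=
  if e ∈ E then min (p e.1) (q e.2) else 0

/-- Fractional greedy. -/
noncomputable def run {n m : ℕ} (E : Finset (Fin n × Fin m)) :
    List (Fin n × Fin m) → (Fin n → ℝ) → (Fin m → ℝ) → (Fin n × Fin m) → ℝ
  | [], _, _ => fun _ => 0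
  | e :: L, p, q => fun f => (if f = e then amt E e p q else 0) +
      run E L (Function.update p e.1 (p e.1 - amt E e p q))
        (Function.update q e.2 (q e.2 - amt E e p q)) f

variable {n m : ℕ}

lemma run_sum (E : Finset (Fin n × Fin m)) (e L p q) (w : Fin n × Fin m → ℝ) :
    ∑ f, w f * run E (e :: L) p q f = w e * amt E e p q +
      ∑ f, w f * run E L (Function.update p e.1 (p e.1 - amt E e p q))
        (Function.update q e.2 (q e.2 - amt E e p q)) f := by
  simp [run, mul_add, sum_add_distrib]

lemma amt_nonneg (E : Finset (Fin n × Fin m)) (e p q) (hp : ∀ i, 0 ≤ p i) (hq : ∀ j, 0 ≤ q j) :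
    0 ≤ amt E e p q := by
  unfold amt; split_ifs
  · exact le_min (hp _) (hq _)
  · exact le_rfl

lemma amt_le1 (E : Finset (Fin n × Fin m)) (e p q) (hp : ∀ i, 0 ≤ p i) :
    amt E e p q ≤ p e.1 := by
  unfold amt; split_ifs
  · exact min_le_left _ _
  · exact hp _

lemma amt_le2 (E : Finset (Fin n × Fin m)) (e p q) (hq : ∀ i, 0 ≤ q i) :
    amt E e p q ≤ q e.2 := by
  unfold amt; split_ifs
  · exact min_le_right _ _
  · exact hq _

lemma nxt_nonneg {α : Type*} [DecidableEq α] (p : α → ℝ) (a : α) (t : ℝ) (hp : ∀ i, 0 ≤ p i)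
    (h : t ≤ p a) : ∀ i, 0 ≤ Function.update p a (p a - t) i := by
  intro i
  by_cases hi : i = a
  · subst hi; simpa using h
  · simpa [hi] using hp i

lemma run_nonneg (E : Finset (Fin n × Fin m)) (L) : ∀ p q, (∀ i, 0 ≤ p i) → (∀ j, 0 ≤ q j) →
    ∀ f, 0 ≤ run E L p q f := by
  induction L with
  | nil => intro p q _ _ f; simp [run]
  | cons e L ih =>
    intro p q hp hq f
    have h1 := amt_nonneg E e p q hp hq
    have := ih _ _ (nxt_nonneg p e.1 _ hp (amt_le1 E e p q hp))
      (nxt_nonneg q e.2 _ hq (amt_le2 E e p q hq)) f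
    simp only [run]
    split_ifs <;> linarith

lemma run_supp (E : Finset (Fin n × Fin m)) (L) : ∀ p q f, run E L p q f ≠ 0 → f ∈ E ∧ f ∈ L := by
  induction L with
  | nil => intro p q f; simp [run]
  | cons e L ih =>
    intro p q f h
    simp only [run] at h
    by_cases h2 : run E L (Function.update p e.1 (p e.1 - amt E e p q))
        (Function.update q e.2 (q e.2 - amt E e p q)) f = 0
    · rw [h2] at h
      by_cases hf : f = e
      · subst hf
        by_cases hE : f ∈ E
        · simp [hE]
        · simp [amt, hE] at h
      · simp [hf] at h
    · have := ih _ _ _ h2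
      simp [this]

lemma run_row (E : Finset (Fin n × Fin m)) (i : Fin n) (L) :
    ∀ p q, (∀ i, 0 ≤ p i) → (∀ j, 0 ≤ q j) →
    ∑ f, (if f.1 = i then (1:ℝ) else 0) * run E L p q f ≤ p i := by
  induction L with
  | nil => intro p q hp _; simpa [run] using hp i
  | cons e L ih =>
    intro p q hp hq
    have := ih _ _ (nxt_nonneg p e.1 _ hp (amt_le1 E e p q hp))
      (nxt_nonneg q e.2 _ hq (amt_le2 E e p q hq))
    rw [run_sum]
    by_cases hi : e.1 = i
    · subst hi
      simp only [Function.update_self] at this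
      simp only [if_true]; linarith
    · rw [Function.update_of_ne (Ne.symm hi)] at this
      simp only [hi, if_false]; linarith

lemma run_col (E : Finset (Fin n × Fin m)) (j : Fin m) (L) :
    ∀ p q, (∀ i, 0 ≤ p i) → (∀ j, 0 ≤ q j) →
    ∑ f, (if f.2 = j then (1:ℝ) else 0) * run E L p q f ≤ q j := by
  induction L with
  | nil => intro p q _ hq; simpa [run] using hq j
  | cons e L ih =>
    intro p q hp hq
    have := ih _ _ (nxt_nonneg p e.1 _ hp (amt_le1 E e p q hp))
      (nxt_nonneg q e.2 _ hq (amt_le2 E e p q hq))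
    rw [run_sum]
    by_cases hi : e.2 = j
    · subst hi
      simp only [Function.update_self] at this
      simp only [if_true]; linarith
    · rw [Function.update_of_ne (Ne.symm hi)] at this
      simp only [hi, if_false]; linarith

lemma sum_change {α : Type*} [DecidableEq α] (S : Finset α) (a : α) (ha : a ∈ S) (g g' : α → ℝ)
    (h : ∀ b, b ≠ a → g' b = g b) : ∑ b ∈ S, g' b = ∑ b ∈ S, g b + (g' a - g a) := by
  rw [← add_sum_erase S g ha, ← add_sum_erase S g' ha,
    sum_congr rfl (fun b hb => h b (ne_of_mem_erase hb))]
  ring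

lemma sum_upd {α : Type*} [DecidableEq α] [Fintype α] (p w : α → ℝ) (a : α) (t : ℝ) :
    ∑ b, Function.update p a (p a - t) b * w b = ∑ b, p b * w b - t * w a := by
  rw [sum_change univ a (mem_univ _) (fun b => p b * w b)]
  · simp; ring
  · intro b hb; simp [hb]

/-- Dual certificate for the greedy. -/
lemma run_dual (E : Finset (Fin n × Fin m)) (d : Fin n × Fin m → ℝ) (hd : ∀ f, 0 ≤ d f) (L) :
    L.Pairwise (fun a b => d b ≤ d a) → ∀ p q, (∀ i, 0 ≤ p i) → (∀ j, 0 ≤ q j) →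
    ∀ D, 0 ≤ D → (∀ f ∈ L, d f ≤ D) →
    ∃ (α : Fin n → ℝ) (β : Fin m → ℝ), (∀ i, 0 ≤ α i ∧ α i ≤ D) ∧ (∀ j, 0 ≤ β j ∧ β j ≤ D) ∧
      (∀ f ∈ L, f ∈ E → d f ≤ α f.1 + β f.2) ∧
      ∑ i, p i * α i + ∑ j, q j * β j ≤ 2 * ∑ f, d f * run E L p q f := by
  induction L with
  | nil =>
    intro _ p q hp hq D hD _
    exact ⟨0, 0, by simp [hD], by simp [hD], by simp, by simp [run]⟩
  | cons e L ih =>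
    intro hs p q hp hq D hD hLD
    rw [List.pairwise_cons] at hs
    have hp' := nxt_nonneg p e.1 _ hp (amt_le1 E e p q hp)
    have hq' := nxt_nonneg q e.2 _ hq (amt_le2 E e p q hq)
    obtain ⟨α, β, hα, hβ, hc, hv⟩ := ih hs.2 _ _ hp' hq' (d e) (hd e) hs.1
    have heD : d e ≤ D := hLD e (by simp)
    have hα' : ∀ i, 0 ≤ α i ∧ α i ≤ D := fun i => ⟨(hα i).1, (hα i).2.trans heD⟩
    have hβ' : ∀ i, 0 ≤ β i ∧ β i ≤ D := fun i => ⟨(hβ i).1, (hβ i).2.trans heD⟩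
    have ht := amt_nonneg E e p q hp hq
    by_cases hE : e ∈ E
    · rw [run_sum]
      rcases le_total (p e.1) (q e.2) with hle | hle
      · have hamt : amt E e p q = p e.1 := by simp [amt, hE, hle]
        refine ⟨Function.update α e.1 (d e), β, ?_, hβ', ?_, ?_⟩
        · intro i
          by_cases hi : i = e.1
          · subst hi; simp [hd, heD]
          · simpa [hi] using hα' i
        · intro f hf hfE
          have hb := (hβ f.2).1
          have hle' : α f.1 ≤ Function.update α e.1 (d e) f.1 := by
            by_cases hi : f.1 = e.1
            · rw [hi]; simpa using (hα e.1).2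
            · simp [hi]
          rcases List.mem_cons.1 hf with rfl | hf
          · simp; exact hb
          · have := hc f hf hfE; linarith
        · rw [sum_upd, sum_upd] at hv
          have : ∑ i, p i * Function.update α e.1 (d e) i
              = ∑ i, p i * α i + (p e.1 * d e - p e.1 * α e.1) := by
            rw [sum_change univ e.1 (mem_univ _) (fun i => p i * α i)]
            · simp
            · intro b hb; simp [hb]
          rw [this]
          have := mul_le_mul_of_nonneg_left (hβ e.2).2 ht
          have e1 : p e.1 * d e = amt E e p q * d e := by rw [hamt]
          have e2 : p e.1 * α e.1 = amt E e p q * α e.1 := by rw [hamt]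
          linarith
      · have hamt : amt E e p q = q e.2 := by simp [amt, hE, hle]
        refine ⟨α, Function.update β e.2 (d e), hα', ?_, ?_, ?_⟩
        · intro i
          by_cases hi : i = e.2
          · subst hi; simp [hd, heD]
          · simpa [hi] using hβ' i
        · intro f hf hfE
          have hb := (hα f.1).1
          have hle' : β f.2 ≤ Function.update β e.2 (d e) f.2 := by
            by_cases hi : f.2 = e.2
            · rw [hi]; simpa using (hβ e.2).2
            · simp [hi]
          rcases List.mem_cons.1 hf with rfl | hf
          · simp; exact hb
          · have := hc f hf hfE; linarith
        · rw [sum_upd, sum_upd] at hv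
          have : ∑ i, q i * Function.update β e.2 (d e) i
              = ∑ i, q i * β i + (q e.2 * d e - q e.2 * β e.2) := by
            rw [sum_change univ e.2 (mem_univ _) (fun i => q i * β i)]
            · simp
            · intro b hb; simp [hb]
          rw [this]
          have := mul_le_mul_of_nonneg_left (hα e.1).2 ht
          have e1 : q e.2 * d e = amt E e p q * d e := by rw [hamt]
          have e2 : q e.2 * β e.2 = amt E e p q * β e.2 := by rw [hamt]
          linarith
    · refine ⟨α, β, hα', hβ', ?_, ?_⟩
      · intro f hf hfE
        rcases List.mem_cons.1 hf with rfl | hf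
        · exact absurd hfE hE
        · exact hc f hf hfE
      · rw [run_sum]
        have h0 : amt E e p q = 0 := by simp [amt, hE]
        rw [h0] at hv ⊢
        simpa using hv

/-- Potential comparing two runs. -/
noncomputable def pot (i : Fin n) (pT : Fin n → ℝ) (qT : Fin m → ℝ) (pL : Fin n → ℝ)
    (qL : Fin m → ℝ) : ℝ :=
  ∑ j, max (qL j - qT j) 0 + ∑ k ∈ univ.erase i, max (pT k - pL k) 0

lemma pot_nonneg (i : Fin n) (pT : Fin n → ℝ) (qT : Fin m → ℝ) (pL : Fin n → ℝ)
    (qL : Fin m → ℝ) : 0 ≤ pot i pT qT pL qL :=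
  add_nonneg (sum_nonneg fun _ _ => le_max_right _ _) (sum_nonneg fun _ _ => le_max_right _ _)

lemma pot_step_self (pT : Fin n → ℝ) (qT : Fin m → ℝ) (pL : Fin n → ℝ)
    (qL : Fin m → ℝ) (e : Fin n × Fin m) (tT tL : ℝ) :
    pot e.1 (Function.update pT e.1 (pT e.1 - tT)) (Function.update qT e.2 (qT e.2 - tT))
      (Function.update pL e.1 (pL e.1 - tL)) (Function.update qL e.2 (qL e.2 - tL)) =
    pot e.1 pT qT pL qL + (max (qL e.2 - tL - (qT e.2 - tT)) 0 - max (qL e.2 - qT e.2) 0) := by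
  unfold pot
  rw [sum_change univ e.2 (mem_univ _) (fun j => max (qL j - qT j) 0)]
  · rw [sum_congr rfl (g := fun k => max (pT k - pL k) 0)]
    · simp; ring
    · intro k hk; simp [ne_of_mem_erase hk]
  · intro b hb; simp [hb]

lemma pot_step_ne (i : Fin n) (pT : Fin n → ℝ) (qT : Fin m → ℝ) (pL : Fin n → ℝ)
    (qL : Fin m → ℝ) (e : Fin n × Fin m) (hei : e.1 ≠ i) (tT tL : ℝ) :
    pot i (Function.update pT e.1 (pT e.1 - tT)) (Function.update qT e.2 (qT e.2 - tT))
      (Function.update pL e.1 (pL e.1 - tL)) (Function.update qL e.2 (qL e.2 - tL)) =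
    pot i pT qT pL qL + (max (qL e.2 - tL - (qT e.2 - tT)) 0 - max (qL e.2 - qT e.2) 0)
      + (max (pT e.1 - tT - (pL e.1 - tL)) 0 - max (pT e.1 - pL e.1) 0) := by
  unfold pot
  rw [sum_change univ e.2 (mem_univ _) (fun j => max (qL j - qT j) 0)]
  · rw [sum_change (univ.erase i) e.1 (by simp [hei]) (fun k => max (pT k - pL k) 0)]
    · simp; ring
    · intro b hb; simp [hb]
  · intro b hb; simp [hb]

lemma arith_ne (p q p' q' : ℝ) :
    max (q' - min p' q' - (q - min p q)) 0 + max (p - min p q - (p' - min p' q')) 0 ≤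
      max (q' - q) 0 + max (p - p') 0 := by
  rcases le_total p q with h1 | h1 <;> rcases le_total p' q' with h2 | h2 <;>
  simp only [h1, h2, min_eq_left, min_eq_right] <;>
  rcases le_total (q' - q) 0 with h3 | h3 <;> rcases le_total (p - p') 0 with h4 | h4 <;>
  simp only [h3, h4, max_eq_left, max_eq_right] <;>
  grind

lemma truth (E E' : Finset (Fin n × Fin m)) (i : Fin n)
    (hag : ∀ f : Fin n × Fin m, f.1 ≠ i → (f ∈ E ↔ f ∈ E'))
    (d w : Fin n × Fin m → ℝ) (hd : ∀ f, 0 ≤ d f)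
    (hw : ∀ f, w f = if f.1 = i ∧ f ∈ E then d f else 0) (L) :
    L.Pairwise (fun a b => d b ≤ d a) → ∀ pT qT pL qL,
    (∀ i, 0 ≤ pT i) → (∀ j, 0 ≤ qT j) → (∀ i, 0 ≤ pL i) → (∀ j, 0 ≤ qL j) →
    ∀ D Δ, 0 ≤ D → 0 ≤ Δ → (∀ f ∈ L, d f ≤ D) → pL i - pT i ≤ Δ →
    (pot i pT qT pL qL ≤ Δ ∨ pT i = 0) →
    ∑ f, w f * run E' L pL qL f ≤ ∑ f, w f * run E L pT qT f + D * Δ := by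
  induction L with
  | nil =>
    intro _ pT qT pL qL _ _ _ _ D Δ hD hΔ _ _ _
    simp [run]; positivity
  | cons e L ih =>
    intro hs pT qT pL qL hpT hqT hpL hqL D Δ hD hΔ hLD hb hpot
    rw [List.pairwise_cons] at hs
    have T0 := amt_nonneg E e pT qT hpT hqT
    have T1 := amt_le1 E e pT qT hpT
    have T2 := amt_le2 E e pT qT hqT
    have L0 := amt_nonneg E' e pL qL hpL hqL
    have L1 := amt_le1 E' e pL qL hpL
    have L2 := amt_le2 E' e pL qL hqL
    rw [run_sum, run_sum]
    have IH := ih hs.2 _ _ _ _ (nxt_nonneg pT e.1 _ hpT T1) (nxt_nonneg qT e.2 _ hqT T2)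
      (nxt_nonneg pL e.1 _ hpL L1) (nxt_nonneg qL e.2 _ hqL L2)
    have P0 := pot_nonneg i (Function.update pT e.1 (pT e.1 - amt E e pT qT))
      (Function.update qT e.2 (qT e.2 - amt E e pT qT))
      (Function.update pL e.1 (pL e.1 - amt E' e pL qL))
      (Function.update qL e.2 (qL e.2 - amt E' e pL qL))
    by_cases hei : e.1 = i
    · subst hei
      rw [pot_step_self] at IH P0
      simp only [Function.update_self] at IH
      have hpLe := hpL e.1
      by_cases hE : e ∈ E
      · have hwe : w e = d e := by simp [hw, hE]
        -- the new slack
        have key : pot e.1 pT qT pL qL + (max (qL e.2 - amt E' e pL qL -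
            (qT e.2 - amt E e pT qT)) 0 - max (qL e.2 - qT e.2) 0)
              ≤ Δ + amt E e pT qT - amt E' e pL qL ∨ pT e.1 - amt E e pT qT = 0 := by
          rcases hpot with hpot | hpot
          · have hT : amt E e pT qT = min (pT e.1) (qT e.2) := by simp [amt, hE]
            rcases le_total (pT e.1) (qT e.2) with h | h
            · right; rw [hT, min_eq_left h]; ring
            · left
              rw [min_eq_right h] at hT
              rw [hT]
              have : max (qL e.2 - amt E' e pL qL - (qT e.2 - qT e.2)) 0 
                  ≤ max (qL e.2 - qT e.2) 0 + qT e.2 - amt E' e pL qL := by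
                have := le_max_left (qL e.2 - qT e.2) 0
                apply max_le <;> linarith
              linarith
          · right; linarith
        have hΔ' : 0 ≤ Δ + amt E e pT qT - amt E' e pL qL := by
          rcases key with key | key <;> linarith
        have := IH (d e) _ (hd e) hΔ' hs.1 (by linarith) key
        have h2 := mul_le_mul_of_nonneg_right (hLD e (by simp)) hΔ
        rw [hwe]
        linarith
      · have hwe : w e = 0 := by simp [hw, hE]
        have hT : amt E e pT qT = 0 := by simp [amt, hE]
        rw [hT] at IH ⊢
        have := IH D Δ hD hΔ (fun f hf => hLD f (by simp [hf])) (by linarith) (by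
          rcases hpot with hpot | hpot
          · left
            have : max (qL e.2 - amt E' e pL qL - (qT e.2 - 0)) 0
                  ≤ max (qL e.2 - qT e.2) 0 := max_le_max (by linarith) le_rfl
            linarith
          · right; linarith)
        rw [hwe]; linarith
    · have hwe : w e = 0 := by simp [hw, hei]
      rw [pot_step_ne _ _ _ _ _ _ hei] at IH
      rw [Function.update_of_ne (Ne.symm hei), Function.update_of_ne (Ne.symm hei)] at IH
      have := IH D Δ hD hΔ (fun f hf => hLD f (by simp [hf])) hb (by
        rcases hpot with hpot | hpot
        · left
          by_cases hE : e ∈ E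
          · have hE' := (hag e hei).1 hE
            simp only [amt, hE, hE', if_true]
            have := arith_ne (pT e.1) (qT e.2) (pL e.1) (qL e.2)
            linarith
          · have hE' : e ∉ E' := fun h => hE ((hag e hei).2 h)
            simp only [amt, hE, hE', if_false]
            simpa using hpot
        · right; exact hpot)
      rw [hwe]; linarith

end SG

namespace SG
open Finset

/-- clamp of `t - k` to the unit interval -/
noncomputable def phi (k : ℕ) (t : ℝ) : ℝ := min (max (t - k) 0) 1

lemma phi_mono (k : ℕ) : Monotone (phi k) := by
  intro a b h
  unfold phi
  gcongr

lemma phi_sum (N : ℕ) (t : ℝ) (ht : 0 ≤ t) : ∑ k ∈ range N, phi k t = min t N := by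
  induction N with
  | zero => simp [ht]
  | succ N ih =>
    rw [sum_range_succ, ih]
    push_cast
    unfold phi
    grind

lemma phi_le (k : ℕ) (t : ℝ) : phi k t ≤ 1 := min_le_right _ _

lemma phi_pos (k : ℕ) (t : ℝ) (h : 0 < phi (k+1) t) : phi k t = 1 := by
  unfold phi at *
  push_cast at h
  grind

lemma slots_aux {n : ℕ} (N : ℕ) (y s : Fin n → ℝ) (hy : ∀ i, 0 ≤ y i) (hs : ∀ i, 0 ≤ s i)
    (S : Finset (Fin n)) : ∑ i ∈ S, y i ≤ N →
    ∃ Y : Fin n → ℕ → ℝ, (∀ i k, 0 ≤ Y i k) ∧ (∀ i ∈ S, ∑ k ∈ range N, Y i k = y i) ∧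
      (∀ k, ∑ i ∈ S, Y i k = phi k (∑ i ∈ S, y i)) ∧
      (∀ i ∈ S, ∀ k, 0 < Y i (k+1) → s i ≤ ∑ i' ∈ S, Y i' k * s i') := by
  classical
  induction S using Finset.induction_on_max_value (fun i => - s i) with
  | empty =>
    intro _
    exact ⟨fun _ _ => 0, by simp, by simp, by simp [phi], by simp⟩
  | insert a S ha hmax ih =>
    intro hN
    rw [sum_insert ha] at hN
    have hP : 0 ≤ ∑ i ∈ S, y i := sum_nonneg fun i _ => hy i
    obtain ⟨Y, h0, h1, h2, h3⟩ := ih (by linarith [hy a])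
    set P := ∑ i ∈ S, y i with hPdef
    have hne : ∀ i ∈ S, i ≠ a := fun i hi h => ha (h ▸ hi)
    have hm : ∀ k, phi k P ≤ phi k (y a + P) := fun k => phi_mono k (by linarith [hy a])
    let Y' : Fin n → ℕ → ℝ := fun i k => if i = a then phi k (y a + P) - phi k P else Y i k
    have hY' : ∀ i k, 0 ≤ Y' i k := by
      intro i k
      by_cases hi : i = a
      · simp only [Y', hi, if_true]; linarith [hm k]
      · simp only [Y', hi, if_false]; exact h0 i k
    have hYS : ∀ i ∈ S, ∀ k, Y' i k = Y i k := by
      intro i hi k; simp [Y', hne i hi]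
    have hcol : ∀ k, ∑ i ∈ insert a S, Y' i k = phi k (∑ i ∈ insert a S, y i) := by
      intro k
      rw [sum_insert ha, sum_insert ha, sum_congr rfl (fun i hi => hYS i hi k), h2 k]
      simp [Y', P]
    refine ⟨Y', hY', ?_, hcol, ?_⟩
    · intro i hi
      rcases mem_insert.1 hi with rfl | hi
      · simp only [Y', if_true, sum_sub_distrib]
        rw [phi_sum _ _ hP, phi_sum _ _ (by linarith [hy i]), min_eq_left hN,
          min_eq_left (by linarith [hy i])]
        ring
      · rw [sum_congr rfl (fun k _ => hYS i hi k)]; exact h1 i hi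
    · intro i hi k hk
      rcases mem_insert.1 hi with rfl | hi
      · have hpos : 0 < phi (k+1) (y i + P) := by
          have : 0 ≤ phi (k+1) P := by unfold phi; positivity
          simp only [Y', if_true] at hk
          linarith
        have h4 := hcol k
        rw [sum_insert (f := y) ha, ← hPdef, phi_pos _ _ hpos] at h4
        calc s i = ∑ i' ∈ insert i S, Y' i' k * s i := by rw [← sum_mul, h4, one_mul]
          _ ≤ _ := by
            apply sum_le_sum
            intro b hb
            apply mul_le_mul_of_nonneg_left _ (hY' b k)
            rcases mem_insert.1 hb with rfl | hb
            · exact le_rfl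
            · linarith [hmax b hb]
      · rw [hYS i hi] at hk
        have := h3 i hi k hk
        rw [sum_insert ha, sum_congr rfl (fun i hi => by rw [hYS i hi k])]
        linarith [mul_nonneg (hY' a k) (hs a)]

lemma slots {n : ℕ} (y s : Fin n → ℝ) (hy : ∀ i, 0 ≤ y i) (hy1 : ∀ i, y i ≤ 1)
    (hs : ∀ i, 0 ≤ s i) :
    ∃ Y : Fin n → ℕ → ℝ, (∀ i k, 0 ≤ Y i k) ∧ (∀ i, ∑ k ∈ range n, Y i k = y i) ∧
      (∀ k, ∑ i, Y i k ≤ 1) ∧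
      (∀ i k, 0 < Y i (k+1) → s i ≤ ∑ i', Y i' k * s i') := by
  obtain ⟨Y, h0, h1, h2, h3⟩ := slots_aux n y s hy hs univ (by
    calc ∑ i, y i ≤ ∑ i : Fin n, (1:ℝ) := sum_le_sum fun i _ => hy1 i
      _ = n := by simp)
  exact ⟨Y, h0, fun i => h1 i (mem_univ _), fun k => (h2 k).trans_le (phi_le _ _),
    fun i k => h3 i (mem_univ _) k⟩

/-- Decomposition of a fractional matching. -/
lemma frac_match {J S : Type*} [Fintype J] [Fintype S] [DecidableEq J] [DecidableEq S]
    (Z : J → S → ℝ) (h0 : ∀ i k, 0 ≤ Z i k) (hr : ∀ i, ∑ k, Z i k ≤ 1) (hc : ∀ k, ∑ i, Z i k ≤ 1) :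
    ∃ w : Equiv.Perm (J ⊕ S) → ℝ, (∀ σ, 0 ≤ w σ) ∧ ∑ σ, w σ = 1 ∧
      ∀ i k, ∑ σ, w σ * (if σ (Sum.inl i) = Sum.inr k then 1 else 0) = Z i k := by
  let M : Matrix (J ⊕ S) (J ⊕ S) ℝ :=
    Matrix.fromBlocks (Matrix.diagonal fun i => 1 - ∑ k, Z i k) (Matrix.of Z)
      (Matrix.of Z).transpose (Matrix.diagonal fun k => 1 - ∑ i, Z i k)
  have hM : M ∈ doublyStochastic ℝ (J ⊕ S) := by
    rw [mem_doublyStochastic_iff_sum]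
    refine ⟨?_, ?_, ?_⟩
    · rintro (a | a) (b | b)
      · simp only [M, Matrix.fromBlocks_apply₁₁, Matrix.diagonal_apply]
        split_ifs
        · linarith [hr a]
        · exact le_rfl
      · exact h0 _ _
      · exact h0 _ _
      · simp only [M, Matrix.fromBlocks_apply₂₂, Matrix.diagonal_apply]
        split_ifs
        · linarith [hc a]
        · exact le_rfl
    · rintro (a | a) <;> simp [M, Matrix.diagonal_apply]
    · rintro (a | a) <;> simp [M, Matrix.diagonal_apply]
  obtain ⟨w, hw0, hw1, hw⟩ := exists_eq_sum_perm_of_mem_doublyStochastic hM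
  refine ⟨w, hw0, hw1, fun i k => ?_⟩
  have := congrFun (congrFun hw (Sum.inl i)) (Sum.inr k)
  rw [Matrix.sum_apply] at this
  simp only [Matrix.smul_apply, smul_eq_mul] at this
  rw [show M (Sum.inl i) (Sum.inr k) = Z i k from rfl] at this
  rw [← this]
  refine sum_congr rfl fun σ _ => ?_
  simp [Equiv.Perm.permMatrix, PEquiv.toMatrix_apply, eq_comm]

/-- The rounded assignment. -/
def asg {n m : ℕ} (σ : Equiv.Perm (Fin n ⊕ (Fin m × Fin n))) (b : Bool) (i : Fin n) :
    Option (Fin m) :=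
  match σ (Sum.inl i) with
  | Sum.inl _ => none
  | Sum.inr jk => if decide (jk.2.val = 0) = b then some jk.1 else none

lemma asg_eq {n m : ℕ} (σ : Equiv.Perm (Fin n ⊕ (Fin m × Fin n))) (b : Bool) (i : Fin n) (j) :
    asg σ b i = some j ↔ ∃ k, σ (Sum.inl i) = Sum.inr (j, k) ∧ decide (k.val = 0) = b := by
  unfold asg
  rcases h : σ (Sum.inl i) with a | ⟨j', k⟩
  · simp
  · simp only [Option.ite_none_right_eq_some, Option.some.injEq, Sum.inr.injEq, Prod.mk.injEq]
    constructor
    · rintro ⟨h1, rfl⟩; exact ⟨k, ⟨rfl, rfl⟩, h1⟩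
    · rintro ⟨k', ⟨rfl, rfl⟩, h1⟩; exact ⟨h1, rfl⟩

lemma rounding {n m : ℕ} (y : Fin n × Fin m → ℝ) (s : Fin n → ℝ) (c : Fin m → ℝ)
    (hs : ∀ i, 0 ≤ s i) (hc0 : ∀ j, 0 ≤ c j)
    (hy : ∀ f, 0 ≤ y f) (hr : ∀ i, ∑ j, y (i, j) ≤ 1) (hc : ∀ j, ∑ i, y (i, j) * s i ≤ c j)
    (hsup : ∀ i j, y (i, j) ≠ 0 → s i ≤ c j) :
    ∃ A : (Fin n → Option (Fin m)) → ℝ, (∀ x, 0 ≤ A x) ∧ ∑ x, A x = 1 ∧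
      (∀ x, A x ≠ 0 → (∀ i j, x i = some j → y (i, j) ≠ 0) ∧
        ∀ j, ∑ i ∈ univ.filter (fun i => x i = some j), s i ≤ c j) ∧
      ∀ i j, ∑ x, A x * (if x i = some j then 1 else 0) = y (i, j) / 2 := by
  have hy1 : ∀ i j, y (i, j) ≤ 1 := fun i j =>
    (single_le_sum (f := fun j => y (i, j)) (fun j _ => hy _) (mem_univ j)).trans (hr i)
  choose Y hY0 hY1 hY2 hY3 using fun j => slots (fun i => y (i, j)) s (fun i => hy _)
    (fun i => hy1 i j) hs
  obtain ⟨w, hw0, hw1, hw⟩ := frac_match (fun (i : Fin n) (jk : Fin m × Fin n) => Y jk.1 i jk.2)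
    (fun i jk => hY0 _ _ _)
    (fun i => by
      rw [Fintype.sum_prod_type]
      refine le_trans (le_of_eq ?_) (hr i)
      refine sum_congr rfl fun j _ => ?_
      rw [← hY1 j i]
      exact Fin.sum_univ_eq_sum_range (fun k => Y j i k) n)
    (fun jk => hY2 _ _)
  have hpos : ∀ σ, w σ ≠ 0 → ∀ i j k, σ (Sum.inl i) = Sum.inr (j, k) → 0 < Y j i k := by
    intro σ hσ i j k h
    rw [← hw i (j, k)]
    refine sum_pos' (fun τ _ => mul_nonneg (hw0 τ) (by split_ifs <;> norm_num))
      ⟨σ, mem_univ _, ?_⟩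
    simpa [h] using lt_of_le_of_ne (hw0 σ) (Ne.symm hσ)
  have hYy : ∀ i j k, k < n → 0 < Y j i k → y (i, j) ≠ 0 := by
    intro i j k hk h h'
    have h2 := hY1 j i
    simp only [h'] at h2
    rw [sum_eq_zero_iff_of_nonneg (fun k _ => hY0 j i k)] at h2
    exact h.ne' (h2 k (mem_range.2 hk))
  let A : (Fin n → Option (Fin m)) → ℝ := fun x =>
    ∑ σ, ∑ b : Bool, if asg σ b = x then w σ / 2 else 0
  have hA : ∀ g : (Fin n → Option (Fin m)) → ℝ, ∑ x, A x * g x =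
      ∑ σ, ∑ b : Bool, w σ / 2 * g (asg σ b) := by
    intro g
    simp only [A, sum_mul]
    rw [sum_comm]
    refine sum_congr rfl fun σ _ => ?_
    rw [sum_comm]
    refine sum_congr rfl fun b _ => ?_
    simp
  refine ⟨A, ?_, ?_, ?_, ?_⟩
  · intro x
    refine sum_nonneg fun σ _ => sum_nonneg fun b _ => ?_
    have := hw0 σ
    split_ifs <;> positivity
  · have := hA (fun _ => 1)
    simp only [mul_one] at this
    rw [this, ← hw1]
    refine sum_congr rfl fun σ _ => ?_
    rw [Fintype.sum_bool]; ring
  · intro x hx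
    obtain ⟨σ, _, hσ⟩ := exists_ne_zero_of_sum_ne_zero hx
    obtain ⟨b, _, hb⟩ := exists_ne_zero_of_sum_ne_zero hσ
    have hxe : asg σ b = x := by
      by_contra h; simp [h] at hb
    have hwσ : w σ ≠ 0 := by
      intro h; simp [h] at hb
    subst hxe
    have hyne : ∀ i j, asg σ b i = some j → y (i, j) ≠ 0 := by
      intro i j h
      obtain ⟨k, h1, _⟩ := (asg_eq _ _ _ _).1 h
      exact hYy i j k k.2 (hpos σ hwσ i j k h1)
    refine ⟨hyne, fun j => ?_⟩
    have hk : ∀ i, ∃ k : ℕ, asg σ b i = some j →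
        ∃ h : k < n, σ (Sum.inl i) = Sum.inr (j, ⟨k, h⟩) ∧ decide (k = 0) = b := by
      intro i
      by_cases h : asg σ b i = some j
      · obtain ⟨k, h1, h2⟩ := (asg_eq _ _ _ _).1 h
        exact ⟨k, fun _ => ⟨k.2, h1, h2⟩⟩
      · exact ⟨0, fun h' => absurd h' h⟩
    choose κ hκ using hk
    have hinj : ∀ i i', asg σ b i = some j → asg σ b i' = some j → κ i = κ i' → i = i' := by
      intro i i' h h' e
      obtain ⟨h1, h2, _⟩ := hκ i h
      obtain ⟨h1', h2', _⟩ := hκ i' h'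
      have : σ (Sum.inl i) = σ (Sum.inl i') := by
        rw [h2, h2']; simp [e]
      simpa using σ.injective this
    cases b with
    | true =>
      have hz : ∀ i, asg σ true i = some j → κ i = 0 := by
        intro i h
        obtain ⟨_, _, h3⟩ := hκ i h
        simpa using h3
      by_cases hex : ∃ i, asg σ true i = some j
      · obtain ⟨i, hi⟩ := hex
        have : univ.filter (fun i => asg σ true i = some j) = {i} := by
          ext i'
          simp only [mem_filter, mem_univ, true_and, mem_singleton]
          constructor
          · intro h; exact hinj _ _ h hi (by rw [hz _ h, hz _ hi])
          · rintro rfl; exact hi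
        rw [this, sum_singleton]
        exact hsup i j (hyne i j hi)
      · rw [filter_false_of_mem (fun i _ h => hex ⟨i, h⟩)]
        simpa using hc0 j
    | false =>
      have hz : ∀ i, asg σ false i = some j → 0 < κ i ∧ κ i < n ∧ 0 < Y j i (κ i) := by
        intro i h
        obtain ⟨h1, h2, h3⟩ := hκ i h
        refine ⟨?_, h1, hpos σ hwσ i j _ h2⟩
        have : κ i ≠ 0 := by simpa using h3
        omega
      have hh0 : ∀ k, 0 ≤ ∑ i', Y j i' k * s i' := fun k =>
        sum_nonneg fun i' _ => mul_nonneg (hY0 _ _ _) (hs _)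
      calc ∑ i ∈ univ.filter (fun i => asg σ false i = some j), s i
          ≤ ∑ i ∈ univ.filter (fun i => asg σ false i = some j),
              ∑ i', Y j i' (κ i - 1) * s i' := by
            refine sum_le_sum fun i hi => ?_
            obtain ⟨h1, h2, h3⟩ := hz i (by simpa using hi)
            apply hY3 j i (κ i - 1)
            rwa [Nat.sub_add_cancel h1]
        _ = ∑ k ∈ (univ.filter (fun i => asg σ false i = some j)).image (fun i => κ i - 1),
              ∑ i', Y j i' k * s i' := by
            rw [sum_image]
            intro i hi i' hi' e
            have hi : asg σ false i = some j := by simpa using hi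
            have hi' : asg σ false i' = some j := by simpa using hi'
            have h1 := (hz i hi).1
            have h2 := (hz i' hi').1
            refine hinj i i' hi hi' ?_
            simp only at e
            omega
        _ ≤ ∑ k ∈ range n, ∑ i', Y j i' k * s i' := by
            refine sum_le_sum_of_subset_of_nonneg ?_ (fun k _ _ => hh0 k)
            intro k hk
            obtain ⟨i, hi, rfl⟩ := mem_image.1 hk
            have := (hz i (by simpa using hi)).2.1
            rw [mem_range]; omega
        _ = ∑ i', y (i', j) * s i' := by
            rw [sum_comm]
            refine sum_congr rfl fun i' _ => ?_
            rw [← sum_mul, hY1]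
        _ ≤ c j := hc j
  · intro i j
    rw [hA (fun x => if x i = some j then 1 else 0)]
    have h1 : ∀ σ, ∑ b : Bool, w σ / 2 * (if asg σ b i = some j then (1:ℝ) else 0) =
        (∑ k : Fin n, w σ * (if σ (Sum.inl i) = Sum.inr (j, k) then 1 else 0)) / 2 := by
      intro σ
      rw [← mul_sum, ← mul_sum, mul_div_right_comm]
      congr 1
      unfold asg
      rcases h : σ (Sum.inl i) with a | ⟨j', k⟩
      · simp
      · by_cases hj : j' = j
        · subst hj
          by_cases hk : k.val = 0 <;> simp [hk]
        · simp [hj]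
    rw [sum_congr rfl (fun σ _ => h1 σ), ← sum_div, sum_comm]
    congr 1
    rw [sum_congr rfl (fun k _ => hw i (j, k)), ← hY1 j i]
    exact Fin.sum_univ_eq_sum_range (fun k => Y j i k) n

end SG

namespace SG
open Finset

lemma exists_list {α : Type*} (S : Finset α) (d : α → ℝ) :
    ∃ L : List α, (∀ a, a ∈ L ↔ a ∈ S) ∧ L.Pairwise (fun a b => d b ≤ d a) := by
  classical
  let r : α → α → Prop := fun a b => d b ≤ d a
  have : Std.Total r := ⟨fun a b => le_total _ _⟩
  have : IsTrans α r := ⟨fun a b c h1 h2 => le_trans h2 h1⟩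
  exact ⟨S.toList.insertionSort r, by simp, List.pairwise_insertionSort r _⟩

lemma expect {n m : ℕ} (A : (Fin n → Option (Fin m)) → ℝ) (v y : Fin n × Fin m → ℝ)
    (P : Fin n × Fin m → Prop) [DecidablePred P]
    (hA : ∀ i j, ∑ x, A x * (if x i = some j then 1 else 0) = y (i, j) / 2) (i : Fin n) :
    ∑ x, A x * ∑ j ∈ univ.filter (fun j => P (i, j) ∧ x i = some j), v (i, j) =
      ∑ j, (if P (i, j) then v (i, j) else 0) * y (i, j) / 2 := by
  simp only [mul_sum, sum_filter]
  rw [sum_comm]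
  refine sum_congr rfl fun j _ => ?_
  rw [mul_div_assoc, ← hA i j, mul_sum]
  refine sum_congr rfl fun x _ => ?_
  by_cases h1 : P (i, j) <;> by_cases h2 : x i = some j <;> simp [h1, h2, mul_comm]

end SG

open SG Finset in
theorem stmt15 (n m : ℕ) (v : Fin n × Fin m → ℝ) (s : Fin n → ℝ) (c : Fin m → ℝ)
    (hv : ∀ p, 0 ≤ v p) (hs : ∀ i, 0 < s i) (hc : ∀ j, 0 ≤ c j) :
    ∃ A : Finset (Fin n × Fin m) → (Fin n → Option (Fin m)) → ℝ,
      (∀ E x, 0 ≤ A E x) ∧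
      (∀ E, ∑ x : Fin n → Option (Fin m), A E x = 1) ∧
      (∀ E x, A E x ≠ 0 → SIGAPFeasible s c E x) ∧
      (∀ (E Ei' : Finset (Fin n × Fin m)) (i : Fin n), (∀ e ∈ Ei', e.1 = i) →
        ∑ x : Fin n → Option (Fin m),
            A ((E \ E.filter (fun e => e.1 = i)) ∪ Ei') x *
              ∑ j ∈ Finset.univ.filter (fun j => (i, j) ∈ E ∧ x i = some j), v (i, j)
          ≤ ∑ x : Fin n → Option (Fin m),
              A E x * ∑ j ∈ Finset.univ.filter (fun j => (i, j) ∈ E ∧ x i = some j), v (i, j)) ∧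
      (∀ E z, SIGAPFeasible s c E z →
        SIGAPWelfare v z ≤ 4 * ∑ x : Fin n → Option (Fin m), A E x * SIGAPWelfare v x) := by
  have hs0 : ∀ i, 0 ≤ s i := fun i => (hs i).le
  let d : Fin n × Fin m → ℝ := fun f => v f / s f.1
  have hd : ∀ f, 0 ≤ d f := fun f => div_nonneg (hv f) (hs0 _)
  obtain ⟨L, hL, hLs⟩ := exists_list (univ.filter (fun f : Fin n × Fin m => s f.1 ≤ c f.2)) d
  have hL : ∀ f, f ∈ L ↔ s f.1 ≤ c f.2 := fun f => by simpa using hL f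
  let y : Finset (Fin n × Fin m) → Fin n × Fin m → ℝ := fun E f => run E L s c f / s f.1
  have hvy : ∀ E f, v f * y E f = d f * run E L s c f := by
    intro E f; simp only [y, d]; ring
  have hround := fun E => rounding (y E) s c hs0 hc
    (fun f => div_nonneg (run_nonneg E L s c hs0 hc f) (hs0 _))
    (fun i => by
      have := run_row E i L s c hs0 hc
      rw [Fintype.sum_prod_type, Finset.sum_eq_single i] at this
      · simp only [y]
        rw [← sum_div, div_le_one (hs i)]
        simpa using this
      · intro b _ hb; simp [hb]
      · simp)
    (fun j => by
      have := run_col E j L s c hs0 hc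
      rw [Fintype.sum_prod_type] at this
      refine le_trans (le_of_eq ?_) this
      refine sum_congr rfl fun i _ => ?_
      simp only [y]
      rw [div_mul_cancel₀ _ (hs i).ne']
      simp)
    (fun i j h => by
      have : run E L s c (i, j) ≠ 0 := by
        intro h'; simp [y, h'] at h
      exact (hL (i, j)).1 (run_supp E L s c _ this).2)
  choose A hA0 hA1 hA2 hA3 using hround
  obtain ⟨D, hD0, hD⟩ : ∃ D, 0 ≤ D ∧ ∀ f ∈ L, d f ≤ D :=
    ⟨∑ f, d f, sum_nonneg fun f _ => hd f,
      fun f _ => single_le_sum (fun f _ => hd f) (mem_univ f)⟩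
  refine ⟨A, hA0, hA1, ?_, ?_, ?_⟩
  · intro E x hx
    obtain ⟨h1, h2⟩ := hA2 E x hx
    refine ⟨fun i j h => ?_, h2⟩
    have : run E L s c (i, j) ≠ 0 := by
      intro h'; exact h1 i j h (by simp [y, h'])
    exact (run_supp E L s c _ this).1
  · intro E Ei' i hEi
    set E' := (E \ E.filter (fun e => e.1 = i)) ∪ Ei' with hE'
    rw [expect (A E') v (y E') (fun f => f ∈ E) (hA3 E') i,
      expect (A E) v (y E) (fun f => f ∈ E) (hA3 E) i]
    have hag : ∀ f : Fin n × Fin m, f.1 ≠ i → (f ∈ E ↔ f ∈ E') := by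
      intro f hf
      have : f ∉ Ei' := fun h => hf (hEi f h)
      simp [hE', this, hf]
    have key := truth E E' i hag d (fun f => if f.1 = i ∧ f ∈ E then d f else 0) hd
      (fun f => rfl) L hLs s c s c hs0 hc hs0 hc D 0 hD0 le_rfl hD (by simp)
      (Or.inl (by simp [pot]))
    have conv : ∀ E'', ∑ f : Fin n × Fin m, (if f.1 = i ∧ f ∈ E then d f else 0) * run E'' L s c f
        = ∑ j, (if (i, j) ∈ E then v (i, j) else 0) * y E'' (i, j) := by
      intro E''
      rw [Fintype.sum_prod_type, Finset.sum_eq_single i]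
      · refine sum_congr rfl fun j _ => ?_
        by_cases h : (i, j) ∈ E
        · simp [h, hvy]
        · simp [h]
      · intro b _ hb; simp [hb]
      · simp
    rw [conv, conv] at key
    rw [← sum_div, ← sum_div]
    linarith
  · intro E z hz
    have hW : ∑ x, A E x * SIGAPWelfare v x = (∑ f, d f * run E L s c f) / 2 := by
      simp only [SIGAPWelfare, mul_sum (s := (univ : Finset (Fin n)))]
      rw [sum_comm, Fintype.sum_prod_type, sum_div]
      refine sum_congr rfl fun i _ => ?_
      have := expect (A E) v (y E) (fun _ => True) (hA3 E) i
      simp only [true_and, if_true] at this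
      rw [this, sum_div]
      refine sum_congr rfl fun j _ => ?_
      rw [hvy]
    obtain ⟨α, β, hα, hβ, hc1, hdual⟩ := run_dual E d hd L hLs s c hs0 hc D hD0 hD
    have hfin : SIGAPWelfare v z ≤ ∑ i, s i * α i + ∑ j, c j * β j := by
      have h1 : ∀ i j, z i = some j → v (i, j) ≤ s i * α i + s i * β j := by
        intro i j h
        have hle : s i ≤ c j := by
          refine le_trans ?_ (hz.2 j)
          exact single_le_sum (fun i _ => hs0 i) (by simp [h])
        have := hc1 (i, j) ((hL _).2 hle) (hz.1 i j h)
        have h2 := mul_le_mul_of_nonneg_left this (hs0 i)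
        simp only [d] at h2
        rw [mul_div_cancel₀ _ (hs i).ne'] at h2
        linarith
      calc SIGAPWelfare v z
          ≤ ∑ i, (s i * α i + ∑ j ∈ univ.filter (fun j => z i = some j), s i * β j) := by
            refine sum_le_sum fun i _ => ?_
            rcases h : z i with _ | j
            · simp [mul_nonneg (hs0 i) (hα i).1]
            · simpa [sum_filter] using h1 i j h
        _ = ∑ i, s i * α i + ∑ j, (∑ i ∈ univ.filter (fun i => z i = some j), s i) * β j := by
            rw [sum_add_distrib]
            congr 1
            simp only [sum_filter, sum_mul]
            rw [sum_comm]
            refine sum_congr rfl fun j _ => sum_congr rfl fun i _ => ?_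
            split_ifs <;> simp
        _ ≤ _ := by
            gcongr with j _
            · exact (hβ j).1
            · exact hz.2 j
    rw [hW]
    linarith
end

section
/- Fix numbers of jobs n and machines m, values v : Fin n → ℝ with v ≥ 0, machine-dependent sizes s : Fin n × Fin m → ℝ with s > 0, and capacities c : Fin m → ℝ with c ≥ 0. There exists a map A from edge sets E ⊆ Fin n × Fin m to finitely supported probability distributions over assignments x : Fin n → Option (Fin m) such that: (i) every assignment in the support of A(E) is feasible for VIGAP[E]; (ii) A is truthful in expectation: for every E, every job i, and every set E'_i of pairs with first coordinate i, letting E' = (E \ E_i) ∪ E'_i, the expected value of v(i)·[x assigns i to some machine j with (i,j) ∈ E] under A(E) is at least that under A(E'); and (iii) for every E, 4 · E_{x ~ A(E)}[welfare(x)] ≥ the maximum welfare of a feasible assignment for VIGAP[E]. That is, there is a 4-approximate mechanism without money for the value-invariant generalized assignment problem that is truthful-in-expectation in the private graph model. -/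
/-- Feasibility of an assignment for VIGAP[E] (machine-dependent sizes). -/
def VIGAPFeasible {n m : ℕ} (s : Fin n × Fin m → ℝ) (c : Fin m → ℝ)
    (E : Finset (Fin n × Fin m)) (x : Fin n → Option (Fin m)) : Prop :=
  (∀ i j, x i = some j → (i, j) ∈ E) ∧
    ∀ j, ∑ i ∈ Finset.univ.filter (fun i => x i = some j), s (i, j) ≤ c j

/-- Welfare of an assignment in VIGAP: each assigned job contributes its value. -/
def VIGAPWelfare {n m : ℕ} (v : Fin n → ℝ) (x : Fin n → Option (Fin m)) : ℝ :=
  ∑ i ∈ Finset.univ.filter (fun i => x i ≠ none), v i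

namespace VG
open Finset

noncomputable def Rg {n m : ℕ} (w x : Fin n × Fin m → ℝ) (i : Fin n) : ℝ := ∑ j, w (i, j) * x (i, j)
noncomputable def Lg {n m : ℕ} (w x : Fin n × Fin m → ℝ) (j : Fin m) : ℝ := ∑ i, w (i, j) * x (i, j)
noncomputable def Rw {n m : ℕ} (x : Fin n × Fin m → ℝ) (i : Fin n) : ℝ := Rg (fun _ => 1) x i

noncomputable def bump {n m : ℕ} (x : Fin n × Fin m → ℝ) (e : Fin n × Fin m) (d : ℝ) :
    Fin n × Fin m → ℝ := fun f => x f + if f = e then d else 0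

noncomputable def amt {n m : ℕ} (s : Fin n × Fin m → ℝ) (c : Fin m → ℝ)
    (E : Finset (Fin n × Fin m)) (x : Fin n × Fin m → ℝ) (e : Fin n × Fin m) : ℝ :=
  if e ∈ E then min (1 - Rw x e.1) ((c e.2 - Lg s x e.2) / s e) else 0

noncomputable def stp {n m : ℕ} (s : Fin n × Fin m → ℝ) (c : Fin m → ℝ)
    (E : Finset (Fin n × Fin m)) (x : Fin n × Fin m → ℝ) (e : Fin n × Fin m) :
    Fin n × Fin m → ℝ := bump x e (amt s c E x e)

variable {n m : ℕ}

theorem Rg_bump (w x : Fin n × Fin m → ℝ) (e : Fin n × Fin m) (d : ℝ) (i : Fin n) :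
    Rg w (bump x e d) i = Rg w x i + if i = e.1 then w e * d else 0 := by
  obtain ⟨a, b⟩ := e
  simp only [Rg, bump, mul_add, Finset.sum_add_distrib, Prod.mk.injEq]
  congr 1
  by_cases h : i = a
  · subst h; simp
  · simp [h]

theorem Lg_bump (w x : Fin n × Fin m → ℝ) (e : Fin n × Fin m) (d : ℝ) (j : Fin m) :
    Lg w (bump x e d) j = Lg w x j + if j = e.2 then w e * d else 0 := by
  obtain ⟨a, b⟩ := e
  simp only [Lg, bump, mul_add, Finset.sum_add_distrib, Prod.mk.injEq]
  congr 1
  by_cases h : j = b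
  · subst h; simp
  · simp [h]

theorem Rw_bump (x : Fin n × Fin m → ℝ) (e : Fin n × Fin m) (d : ℝ) (i : Fin n) :
    Rw (bump x e d) i = Rw x i + if i = e.1 then d else 0 := by
  simp [Rw, Rg_bump]

/-- Fractional feasibility. -/
structure Feas (s : Fin n × Fin m → ℝ) (c : Fin m → ℝ) (x : Fin n × Fin m → ℝ) : Prop where
  nn : ∀ e, 0 ≤ x e
  row : ∀ i, Rw x i ≤ 1
  ld : ∀ j, Lg s x j ≤ c j

theorem amt_nonneg {s : Fin n × Fin m → ℝ} {c : Fin m → ℝ} (hs : ∀ p, 0 < s p)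
    {x : Fin n × Fin m → ℝ} (hx : Feas s c x) (E : Finset (Fin n × Fin m)) (e : Fin n × Fin m) :
    0 ≤ amt s c E x e := by
  unfold amt
  split_ifs
  · refine le_min (by linarith [hx.row e.1]) (div_nonneg (by linarith [hx.ld e.2]) (hs e).le)
  · exact le_rfl

theorem amt_row {s : Fin n × Fin m → ℝ} {c : Fin m → ℝ}
    {x : Fin n × Fin m → ℝ} (hx : Feas s c x) (E : Finset (Fin n × Fin m)) (e : Fin n × Fin m) :
    amt s c E x e ≤ 1 - Rw x e.1 := by
  unfold amt
  split_ifs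
  · exact min_le_left _ _
  · linarith [hx.row e.1]

theorem amt_ld {s : Fin n × Fin m → ℝ} {c : Fin m → ℝ} (hs : ∀ p, 0 < s p)
    {x : Fin n × Fin m → ℝ} (hx : Feas s c x) (E : Finset (Fin n × Fin m)) (e : Fin n × Fin m) :
    s e * amt s c E x e ≤ c e.2 - Lg s x e.2 := by
  unfold amt
  split_ifs
  · have := min_le_right (1 - Rw x e.1) ((c e.2 - Lg s x e.2) / s e)
    rw [le_div_iff₀ (hs e)] at this
    linarith
  · linarith [hx.ld e.2]

theorem stp_feas {s : Fin n × Fin m → ℝ} {c : Fin m → ℝ} (hs : ∀ p, 0 < s p)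
    {x : Fin n × Fin m → ℝ} (hx : Feas s c x) (E : Finset (Fin n × Fin m)) (e : Fin n × Fin m) :
    Feas s c (stp s c E x e) := by
  refine ⟨fun f => ?_, fun i => ?_, fun j => ?_⟩
  · have := amt_nonneg hs hx E e
    have := hx.nn f
    simp only [stp, bump]
    split_ifs <;> linarith
  · have := amt_row hx E e
    have := hx.row i
    rw [stp, Rw_bump]
    split_ifs with h
    · subst h; linarith
    · linarith
  · have := amt_ld hs hx E e
    have := hx.ld j
    rw [stp, Lg_bump]
    split_ifs with h
    · subst h; linarith
    · linarith

theorem fold_feas {s : Fin n × Fin m → ℝ} {c : Fin m → ℝ} (hs : ∀ p, 0 < s p)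
    (E : Finset (Fin n × Fin m)) (l : List (Fin n × Fin m)) :
    ∀ x, Feas s c x → Feas s c (l.foldl (stp s c E) x) := by
  induction l with
  | nil => intro x hx; exact hx
  | cons e l ih => intro x hx; exact ih _ (stp_feas hs hx E e)

theorem le_stp {s : Fin n × Fin m → ℝ} {c : Fin m → ℝ} (hs : ∀ p, 0 < s p)
    {x : Fin n × Fin m → ℝ} (hx : Feas s c x) (E : Finset (Fin n × Fin m)) (e : Fin n × Fin m) (f) :
    x f ≤ stp s c E x e f := by
  have := amt_nonneg hs hx E e
  simp only [stp, bump]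
  split_ifs <;> linarith

theorem le_fold {s : Fin n × Fin m → ℝ} {c : Fin m → ℝ} (hs : ∀ p, 0 < s p)
    (E : Finset (Fin n × Fin m)) (l : List (Fin n × Fin m)) :
    ∀ x, Feas s c x → ∀ f, x f ≤ l.foldl (stp s c E) x f := by
  induction l with
  | nil => intro x hx f; exact le_rfl
  | cons e l ih => intro x hx f; exact (le_stp hs hx E e f).trans (ih _ (stp_feas hs hx E e) f)

theorem fold_supp {s : Fin n × Fin m → ℝ} {c : Fin m → ℝ}
    (E : Finset (Fin n × Fin m)) (l : List (Fin n × Fin m)) :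
    ∀ x f, l.foldl (stp s c E) x f ≠ 0 → x f ≠ 0 ∨ (f ∈ l ∧ f ∈ E) := by
  induction l with
  | nil => intro x f h; exact Or.inl h
  | cons e l ih =>
    intro x f h
    rcases ih _ f h with h | h
    · by_cases hfe : f = e
      · by_cases hE : e ∈ E
        · right; subst hfe; simp [hE]
        · left; simpa [stp, bump, amt, hE] using h
      · left; simpa [stp, bump, hfe] using h
    · right; exact ⟨List.mem_cons_of_mem _ h.1, h.2⟩

theorem Rg_mono {w x y : Fin n × Fin m → ℝ} (hw : ∀ e, 0 ≤ w e) (h : ∀ e, x e ≤ y e) (i) :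
    Rg w x i ≤ Rg w y i :=
  Finset.sum_le_sum fun j _ => mul_le_mul_of_nonneg_left (h _) (hw _)

theorem Lg_mono {w x y : Fin n × Fin m → ℝ} (hw : ∀ e, 0 ≤ w e) (h : ∀ e, x e ≤ y e) (i) :
    Lg w x i ≤ Lg w y i :=
  Finset.sum_le_sum fun j _ => mul_le_mul_of_nonneg_left (h _) (hw _)

/-- Greedy covering alternative. -/
theorem fold_cover {s : Fin n × Fin m → ℝ} {c : Fin m → ℝ} {v : Fin n → ℝ} (hs : ∀ p, 0 < s p)
    (hv : ∀ i, 0 ≤ v i) (E : Finset (Fin n × Fin m)) (l : List (Fin n × Fin m)) :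
    ∀ (x : Fin n × Fin m → ℝ) (r : ℝ), Feas s c x →
      l.Pairwise (fun a b => v b.1 / s b ≤ v a.1 / s a) → (∀ e ∈ l, v e.1 / s e ≤ r) →
      (∀ j, r * Lg s x j ≤ Lg (fun e => v e.1) x j) →
      ∀ e ∈ l, e ∈ E → 1 ≤ Rw (l.foldl (stp s c E) x) e.1 ∨
        v e.1 / s e * c e.2 ≤ Lg (fun e => v e.1) (l.foldl (stp s c E) x) e.2 := by
  induction l with
  | nil => intro x r _ _ _ _ e he; simp at he
  | cons e l ih =>
    intro x r hx hp hr hV f hf hfE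
    rw [List.pairwise_cons] at hp
    have hre := hr e (by simp)
    have hx' := stp_feas hs hx E e
    have hV' : ∀ j, v e.1 / s e * Lg s (stp s c E x e) j ≤
        Lg (fun e => v e.1) (stp s c E x e) j := by
      intro j
      have h1 := hV j
      have h0 : 0 ≤ Lg s x j := Finset.sum_nonneg fun i _ => mul_nonneg (hs _).le (hx.nn _)
      have h2 : v e.1 / s e * Lg s x j ≤ r * Lg s x j := mul_le_mul_of_nonneg_right hre h0
      rw [stp, Lg_bump, Lg_bump, mul_add]
      split_ifs with h
      · have : v e.1 / s e * (s e * amt s c E x e) = v e.1 * amt s c E x e := by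
          have := (hs e).ne'
          field_simp
        linarith
      · linarith
    rcases List.mem_cons.1 hf with rfl | hf
    · have key : 1 ≤ Rw (stp s c E x f) f.1 ∨ c f.2 ≤ Lg s (stp s c E x f) f.2 := by
        rw [stp, Rw_bump, Lg_bump]
        simp only [if_true, amt, hfE]
        rcases min_choice (1 - Rw x f.1) ((c f.2 - Lg s x f.2) / s f) with h | h
        · left; rw [h]; linarith
        · right; rw [h, mul_div_cancel₀ _ (hs f).ne']; linarith
      rcases key with h | h
      · left
        exact h.trans (Rg_mono (fun _ => zero_le_one) (le_fold hs E l _ hx') _)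
      · right
        refine le_trans ?_ (Lg_mono (fun e => hv e.1) (le_fold hs E l _ hx') _)
        refine le_trans ?_ (hV' f.2)
        exact mul_le_mul_of_nonneg_left h (div_nonneg (hv _) (hs _).le)
    · exact ih _ _ hx' hp.2 hp.1 hV' f hf hfE

theorem local_contract (s α β FA FB a b : ℝ) (hs : 0 < s) (ha : a = min α (FA / s))
    (hb : b = min β (FB / s)) :
    s * max 0 ((α - a) - (β - b)) + max 0 ((FB - s * b) - (FA - s * a)) ≤
      s * max 0 (α - β) + max 0 (FB - FA) := by
  obtain ⟨p, rfl⟩ : ∃ p, FA = s * p := ⟨FA / s, by field_simp⟩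
  obtain ⟨q, rfl⟩ : ∃ p, FB = s * p := ⟨FB / s, by field_simp⟩
  rw [mul_div_cancel_left₀ _ hs.ne'] at ha hb
  have e1 : s * q - s * b - (s * p - s * a) = s * ((q - b) - (p - a)) := by ring
  have e2 : s * q - s * p = s * (q - p) := by ring
  have e3 : ∀ t, max 0 (s * t) = s * max 0 t := by
    intro t
    rw [mul_max_of_nonneg _ _ hs.le, mul_zero]
  rw [e1, e2, e3, e3, ← mul_add, ← mul_add]
  refine mul_le_mul_of_nonneg_left ?_ hs.le
  subst ha hb
  rcases le_total α p with h1 | h1 <;> rcases le_total β q with h2 | h2 <;>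
    simp only [h1, h2, min_eq_left, min_eq_right] <;>
    rcases le_total 0 (α - β) with h3 | h3 <;> rcases le_total 0 (q - p) with h4 | h4 <;>
    simp only [h3, h4, max_eq_left, max_eq_right] <;>
    rw [← le_sub_iff_add_le] <;>
    refine max_le ?_ ?_ <;> rw [le_sub_iff_add_le, add_comm, ← le_sub_iff_add_le] <;>
    refine max_le ?_ ?_ <;> linarith

theorem sum_diff {ι : Type*} [Fintype ι] [DecidableEq ι] (f g : ι → ℝ) (k : ι)
    (h : ∀ l, l ≠ k → f l = g l) : ∑ l, f l = ∑ l, g l + (f k - g k) := by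
  rw [← Finset.add_sum_erase _ f (Finset.mem_univ k), ← Finset.add_sum_erase _ g (Finset.mem_univ k),
    Finset.sum_congr rfl (fun l hl => h l (Finset.ne_of_mem_erase hl))]
  ring

noncomputable def PhiR (v : Fin n → ℝ) (i : Fin n) (A B : Fin n × Fin m → ℝ) : ℝ :=
  ∑ k, if k = i then 0 else v k * max 0 (Rw B k - Rw A k)
noncomputable def PhiL (s : Fin n × Fin m → ℝ) (A B : Fin n × Fin m → ℝ) : ℝ :=
  ∑ j, max 0 (Lg s A j - Lg s B j)

theorem PhiR_nonneg {v : Fin n → ℝ} (hv : ∀ i, 0 ≤ v i) (i : Fin n) (A B : Fin n × Fin m → ℝ) :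
    0 ≤ PhiR v i A B := by
  refine Finset.sum_nonneg fun k _ => ?_
  split_ifs
  · exact le_rfl
  · exact mul_nonneg (hv k) (le_max_left _ _)

theorem PhiL_nonneg (s : Fin n × Fin m → ℝ) (A B : Fin n × Fin m → ℝ) :
    0 ≤ PhiL s A B := Finset.sum_nonneg fun k _ => le_max_left _ _

theorem PhiR_bump (v : Fin n → ℝ) (i : Fin n) (A B : Fin n × Fin m → ℝ) (e a b) :
    PhiR v i (bump A e a) (bump B e b) = PhiR v i A B + if e.1 = i then 0 else
      v e.1 * (max 0 ((Rw B e.1 + b) - (Rw A e.1 + a)) - max 0 (Rw B e.1 - Rw A e.1)) := by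
  unfold PhiR
  rw [sum_diff _ (fun k => if k = i then 0 else v k * max 0 (Rw B k - Rw A k)) e.1]
  · congr 1
    simp only [Rw_bump, if_true]
    split_ifs <;> ring
  · intro l hl
    simp [Rw_bump, hl]

theorem PhiL_bump (s : Fin n × Fin m → ℝ) (A B : Fin n × Fin m → ℝ) (e a b) :
    PhiL s (bump A e a) (bump B e b) = PhiL s A B + 
      (max 0 ((Lg s A e.2 + s e * a) - (Lg s B e.2 + s e * b)) - max 0 (Lg s A e.2 - Lg s B e.2)) := by
  unfold PhiL
  rw [sum_diff _ (fun j => max 0 (Lg s A j - Lg s B j)) e.2]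
  · congr 1
    simp only [Lg_bump, if_true]
  · intro l hl
    simp [Lg_bump, hl]

noncomputable def ind (E : Finset (Fin n × Fin m)) (e : Fin n × Fin m) : ℝ := if e ∈ E then 1 else 0

theorem step_truth {s : Fin n × Fin m → ℝ} {c : Fin m → ℝ} {v : Fin n → ℝ} (hs : ∀ p, 0 < s p)
    (hv : ∀ i, 0 ≤ v i) (E E' : Finset (Fin n × Fin m)) (i : Fin n)
    (hE : ∀ e, e.1 ≠ i → (e ∈ E' ↔ e ∈ E)) (A B : Fin n × Fin m → ℝ) (hA : Feas s c A)
    (hB : Feas s c B) (e : Fin n × Fin m)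
    (hinv : PhiR v i A B + v e.1 / s e * PhiL s A B ≤ v i * (Rg (ind E) A i - Rg (ind E) B i))
    (hlt : Rw (stp s c E A e) i < 1) :
    PhiR v i (stp s c E A e) (stp s c E' B e) + v e.1 / s e * PhiL s (stp s c E A e) (stp s c E' B e)
      ≤ v i * (Rg (ind E) (stp s c E A e) i - Rg (ind E) (stp s c E' B e) i) := by
  have hA0 := amt_nonneg hs hA E e
  have hB0 := amt_nonneg hs hB E' e
  have hBl := amt_ld hs hB E' e
  have hρ : 0 ≤ v e.1 / s e := div_nonneg (hv _) (hs _).le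
  have hvs : v e.1 = v e.1 / s e * s e := by rw [div_mul_cancel₀ _ (hs e).ne']
  unfold stp at hlt ⊢
  rw [PhiR_bump, PhiL_bump, Rg_bump, Rg_bump]
  by_cases hi : e.1 = i
  · subst hi
    simp only [if_true]
    rw [Rw_bump] at hlt
    simp only [if_true] at hlt
    by_cases he : e ∈ E
    · have hfull : s e * amt s c E A e = c e.2 - Lg s A e.2 := by
        simp only [amt, he, if_true] at hlt ⊢
        rcases min_choice (1 - Rw A e.1) ((c e.2 - Lg s A e.2) / s e) with h | h
        · rw [h] at hlt; linarith
        · rw [h, mul_div_cancel₀ _ (hs e).ne']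
      simp only [ind, he, if_true, one_mul]
      have h1 : max 0 ((Lg s A e.2 + s e * amt s c E A e) - (Lg s B e.2 + s e * amt s c E' B e))
          = (Lg s A e.2 + s e * amt s c E A e) - (Lg s B e.2 + s e * amt s c E' B e) :=
        max_eq_right (by linarith)
      have h2 := le_max_right 0 (Lg s A e.2 - Lg s B e.2)
      rw [h1]
      set a := amt s c E A e
      set b := amt s c E' B e
      have h3 : v e.1 / s e * (Lg s A e.2 + s e * a - (Lg s B e.2 + s e * b) -
          max 0 (Lg s A e.2 - Lg s B e.2)) ≤ v e.1 / s e * (s e * (a - b)) :=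
        mul_le_mul_of_nonneg_left (by linarith) hρ
      rw [← mul_assoc, ← hvs] at h3
      linarith
    · have hz : amt s c E A e = 0 := by simp [amt, he]
      rw [hz]
      simp only [ind, he, if_false]
      have h3 : v e.1 / s e * (max 0 (Lg s A e.2 + s e * 0 - (Lg s B e.2 + s e * amt s c E' B e)) -
          max 0 (Lg s A e.2 - Lg s B e.2)) ≤ 0 := by
        refine mul_nonpos_of_nonneg_of_nonpos hρ (sub_nonpos.2 (max_le_max le_rfl ?_))
        have := mul_nonneg (hs e).le hB0
        linarith
      linarith
  · have hi' : i ≠ e.1 := fun h => hi h.symm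
    simp only [hi, hi', if_false]
    have h3 : v e.1 * (max 0 (Rw B e.1 + amt s c E' B e - (Rw A e.1 + amt s c E A e))
          - max 0 (Rw B e.1 - Rw A e.1))
        + v e.1 / s e * (max 0 (Lg s A e.2 + s e * amt s c E A e - (Lg s B e.2 + s e * amt s c E' B e)) -
          max 0 (Lg s A e.2 - Lg s B e.2)) ≤ 0 := by
      by_cases he : e ∈ E
      · have he' := (hE e hi).2 he
        have := local_contract (s e) (1 - Rw A e.1) (1 - Rw B e.1) (c e.2 - Lg s A e.2)
          (c e.2 - Lg s B e.2) (amt s c E A e) (amt s c E' B e) (hs e) (by simp [amt, he])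
          (by simp [amt, he'])
        rw [show 1 - Rw A e.1 - amt s c E A e - (1 - Rw B e.1 - amt s c E' B e) =
          Rw B e.1 + amt s c E' B e - (Rw A e.1 + amt s c E A e) by ring,
          show 1 - Rw A e.1 - (1 - Rw B e.1) = Rw B e.1 - Rw A e.1 by ring,
          show c e.2 - Lg s B e.2 - s e * amt s c E' B e - (c e.2 - Lg s A e.2 - s e * amt s c E A e)
          = Lg s A e.2 + s e * amt s c E A e - (Lg s B e.2 + s e * amt s c E' B e) by ring,
          show c e.2 - Lg s B e.2 - (c e.2 - Lg s A e.2) = Lg s A e.2 - Lg s B e.2 by ring] at this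
        have h4 := mul_le_mul_of_nonneg_left this hρ
        rw [mul_add, mul_add, ← mul_assoc, ← mul_assoc, ← hvs] at h4
        linarith
      · have he' : e ∉ E' := fun h => he ((hE e hi).1 h)
        simp [amt, he, he']
    linarith

theorem fold_truth {s : Fin n × Fin m → ℝ} {c : Fin m → ℝ} {v : Fin n → ℝ} (hs : ∀ p, 0 < s p)
    (hv : ∀ i, 0 ≤ v i) (E E' : Finset (Fin n × Fin m)) (i : Fin n)
    (hE : ∀ e, e.1 ≠ i → (e ∈ E' ↔ e ∈ E)) (l : List (Fin n × Fin m)) :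
    ∀ (A B : Fin n × Fin m → ℝ) (r : ℝ), Feas s c A → Feas s c B → 0 ≤ r →
      l.Pairwise (fun a b => v b.1 / s b ≤ v a.1 / s a) → (∀ e ∈ l, v e.1 / s e ≤ r) →
      PhiR v i A B + r * PhiL s A B ≤ v i * (Rg (ind E) A i - Rg (ind E) B i) →
      Rw (l.foldl (stp s c E) A) i < 1 →
      0 ≤ v i * (Rg (ind E) (l.foldl (stp s c E) A) i - Rg (ind E) (l.foldl (stp s c E') B) i) := by
  induction l with
  | nil =>
    intro A B r _ _ hr _ _ h _
    exact (add_nonneg (PhiR_nonneg hv _ _ _) (mul_nonneg hr (PhiL_nonneg _ _ _))).trans h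
  | cons e l ih =>
    intro A B r hA hB hr hp hle h hlt
    rw [List.pairwise_cons] at hp
    have hA' := stp_feas hs hA E e
    refine ih _ _ (v e.1 / s e) hA' (stp_feas hs hB E' e) (div_nonneg (hv _) (hs _).le)
      hp.2 hp.1 ?_ hlt
    refine step_truth hs hv E E' i hE A B hA hB e ?_ ?_
    · have := mul_le_mul_of_nonneg_right (hle e (by simp)) (PhiL_nonneg s A B)
      linarith
    · exact (Rg_mono (fun _ => zero_le_one) (le_fold hs E l _ hA') i).trans_lt hlt

/-- Fractional mechanism. -/
theorem frac (v : Fin n → ℝ) (s : Fin n × Fin m → ℝ) (c : Fin m → ℝ)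
    (hv : ∀ i, 0 ≤ v i) (hs : ∀ p, 0 < s p) (hc : ∀ j, 0 ≤ c j) :
    ∃ X : Finset (Fin n × Fin m) → Fin n × Fin m → ℝ,
      (∀ E, Feas s c (X E)) ∧ (∀ E e, X E e ≠ 0 → e ∈ E ∧ s e ≤ c e.2) ∧
      (∀ E E' i, (∀ e : Fin n × Fin m, e.1 ≠ i → (e ∈ E' ↔ e ∈ E)) →
        v i * Rg (ind E) (X E') i ≤ v i * Rg (ind E) (X E) i) ∧
      (∀ E e, e ∈ E → s e ≤ c e.2 → 1 ≤ Rw (X E) e.1 ∨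
        v e.1 / s e * c e.2 ≤ Lg (fun e => v e.1) (X E) e.2) := by
  classical
  obtain ⟨l, hl, hp⟩ : ∃ l : List (Fin n × Fin m), (∀ e, e ∈ l ↔ s e ≤ c e.2) ∧
      l.Pairwise (fun a b => v b.1 / s b ≤ v a.1 / s a) := by
    let r : Fin n × Fin m → Fin n × Fin m → Prop := fun a b => v b.1 / s b ≤ v a.1 / s a
    have : Std.Total r := ⟨fun a b => le_total _ _⟩
    have : IsTrans _ r := ⟨fun a b c h1 h2 => le_trans (α := ℝ) h2 h1⟩
    refine ⟨((Finset.univ.filter fun e : Fin n × Fin m => s e ≤ c e.2).toList).insertionSort r, ?_,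
      List.pairwise_insertionSort r _⟩
    intro e
    simp
  have h0 : Feas s c (fun _ => 0) := ⟨fun _ => le_rfl, fun i => by simp [Rw, Rg],
    fun j => by simpa [Lg] using hc j⟩
  have hbd : ∀ e ∈ l, v e.1 / s e ≤ ∑ f, v f.1 / s f := fun e _ =>
    Finset.single_le_sum (f := fun f : Fin n × Fin m => v f.1 / s f)
      (fun f _ => div_nonneg (hv _) (hs _).le) (Finset.mem_univ e)
  have hX := fun E => fold_feas (c := c) hs E l _ h0
  have hsupp : ∀ E e, l.foldl (stp s c E) (fun _ => 0) e ≠ 0 → e ∈ E ∧ s e ≤ c e.2 := by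
    intro E e h
    rcases fold_supp E l _ e h with h | h
    · exact absurd rfl h
    · exact ⟨h.2, (hl e).1 h.1⟩
  refine ⟨fun E => l.foldl (stp s c E) (fun _ => 0), hX, hsupp, ?_, ?_⟩
  · intro E E' i hE
    have hAE : Rg (ind E) (l.foldl (stp s c E) (fun _ => 0)) i =
        Rw (l.foldl (stp s c E) (fun _ => 0)) i := by
      refine Finset.sum_congr rfl fun j _ => ?_
      by_cases h : l.foldl (stp s c E) (fun _ => 0) (i, j) = 0
      · simp [h]
      · simp [ind, (hsupp E _ h).1]
    by_cases hlt : Rw (l.foldl (stp s c E) (fun _ => 0)) i < 1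
    · have := fold_truth hs hv E E' i hE l _ _ (∑ f, v f.1 / s f) h0 h0
        (Finset.sum_nonneg fun f _ => div_nonneg (hv _) (hs _).le) hp hbd
        (by simp [PhiR, PhiL]) hlt
      linarith
    · refine mul_le_mul_of_nonneg_left ?_ (hv i)
      rw [hAE]
      refine le_trans ?_ (not_lt.1 hlt)
      refine le_trans ?_ ((hX E').row i)
      refine Finset.sum_le_sum fun j _ => mul_le_mul_of_nonneg_right ?_ ((hX E').nn _)
      unfold ind
      split_ifs <;> norm_num
  · intro E e he hsc
    exact fold_cover hs hv E l _ (∑ f, v f.1 / s f) h0 hp hbd (by simp [Lg]) e ((hl e).2 hsc) he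


noncomputable def ub (b : ℕ) (t : ℝ) : ℝ := max 0 (min 1 (t - b))

theorem ub_mono (b : ℕ) {t t' : ℝ} (h : t ≤ t') : ub b t ≤ ub b t' :=
  max_le_max le_rfl (min_le_min le_rfl (by linarith))

theorem ub_le_one (b : ℕ) (t : ℝ) : ub b t ≤ 1 := max_le zero_le_one (min_le_left _ _)

theorem ub_zero (b : ℕ) : ub b 0 = 0 :=
  max_eq_left ((min_le_right _ _).trans (by simp))

theorem ub_eq_one {b : ℕ} {t : ℝ} (h : (b : ℝ) + 1 ≤ t) : ub b t = 1 := by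
  unfold ub
  rw [min_eq_left (by linarith)]
  simp

theorem ub_pos {b : ℕ} {t : ℝ} (h : 0 < ub b t) : (b : ℝ) < t := by
  by_contra h'
  have : ub b t = 0 := max_eq_left ((min_le_right _ _).trans (by linarith))
  linarith

theorem ub_sum (N : ℕ) {t : ℝ} (ht : 0 ≤ t) : ∑ b ∈ range N, ub b t = min t N := by
  induction N with
  | zero => simp [ht]
  | succ N ih =>
    rw [sum_range_succ, ih, ub]
    push_cast
    rcases le_total t N with h | h
    · rw [min_eq_left h, min_eq_left (by linarith : t ≤ (N : ℝ) + 1), max_eq_left]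
      · ring
      · exact (min_le_right _ _).trans (by linarith)
    · rw [min_eq_right h]
      rcases le_total t (N + 1) with h' | h'
      · rw [min_eq_left h', min_eq_right (by linarith), max_eq_right (by linarith)]; ring
      · rw [min_eq_right h', min_eq_left (by linarith), max_eq_right (by linarith)]

theorem bucket_sorted (n : ℕ) (x s : Fin n → ℝ) (hx : ∀ i, 0 ≤ x i) (hx1 : ∀ i, x i ≤ 1)
    (hanti : Antitone s) : ∃ y : Fin n → ℕ → ℝ, (∀ i b, 0 ≤ y i b) ∧
      (∀ i, ∑ b ∈ range n, y i b = x i) ∧ (∀ b, ∑ i, y i b ≤ 1) ∧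
      ∀ i b, y i (b + 1) ≠ 0 → s i ≤ ∑ k, s k * y k b := by
  set g : ℕ → ℝ := fun l => if h : l < n then x ⟨l, h⟩ else 0 with hg
  have hg0 : ∀ l, 0 ≤ g l := by intro l; simp only [hg]; split_ifs; exacts [hx _, le_rfl]
  have hg1 : ∀ l, g l ≤ 1 := by intro l; simp only [hg]; split_ifs; exacts [hx1 _, zero_le_one]
  set C : ℕ → ℝ := fun k => ∑ l ∈ range k, g l with hC
  have hCs : ∀ k, C (k + 1) = C k + g k := fun k => sum_range_succ _ _
  have hCm : Monotone C := monotone_nat_of_le_succ fun k => by rw [hCs]; linarith [hg0 k]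
  have hC0 : C 0 = 0 := by simp [hC]
  have hCnn : ∀ k, 0 ≤ C k := fun k => hC0 ▸ hCm (Nat.zero_le k)
  have hCle : ∀ k, C k ≤ k := by
    intro k
    induction k with
    | zero => simp [hC0]
    | succ k ih => rw [hCs]; push_cast; linarith [hg1 k]
  have htot : ∀ b, ∑ i : Fin n, (ub b (C (i + 1)) - ub b (C i)) = ub b (C n) := by
    intro b
    rw [Fin.sum_univ_eq_sum_range (fun i => ub b (C (i + 1)) - ub b (C i)) n,
      Finset.sum_range_sub (fun i => ub b (C i)), hC0, ub_zero, sub_zero]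
  refine ⟨fun i b => ub b (C (i + 1)) - ub b (C i), ?_, ?_, ?_, ?_⟩
  · intro i b
    exact sub_nonneg.2 (ub_mono b (hCm (Nat.le_succ _)))
  · intro i
    have hle : ∀ k ≤ n, C k ≤ n := fun k hk => (hCle k).trans (by exact_mod_cast hk)
    rw [sum_sub_distrib, ub_sum _ (hCnn _), ub_sum _ (hCnn _), min_eq_left (hle _ i.2),
      min_eq_left (hle _ i.2.le), hCs]
    simp [hg]
  · intro b
    rw [htot]
    exact ub_le_one _ _
  · intro i b hb
    have h1 : 0 < ub (b + 1) (C (i + 1)) := by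
      have h0 : 0 ≤ ub (b + 1) (C i) := le_max_left _ _
      have h2 := ub_mono (b + 1) (hCm (Nat.le_succ (i : ℕ)))
      rcases h2.lt_or_eq with h | h
      · exact h0.trans_lt h
      · exact absurd (sub_eq_zero.2 h.symm) hb
    have h2 := ub_pos h1
    push_cast at h2
    have hone : ∀ l, (i : ℕ) + 1 ≤ l → ub b (C l) = 1 := fun l hl =>
      ub_eq_one (h2.le.trans (hCm hl))
    have h3 : s i = ∑ k : Fin n, s i * (ub b (C (k + 1)) - ub b (C k)) := by
      rw [← mul_sum, htot, hone n i.2, mul_one]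
    rw [h3]
    refine sum_le_sum fun k _ => ?_
    by_cases hk : k ≤ i
    · exact mul_le_mul_of_nonneg_right (hanti hk)
        (sub_nonneg.2 (ub_mono b (hCm (Nat.le_succ _))))
    · have hk' : (i : ℕ) + 1 ≤ k := by
        have := not_le.1 hk
        exact this
      have e1 := hone _ hk'
      have e2 := hone (k + 1) (by omega)
      simp [e1, e2]

theorem bucket (n : ℕ) (x s : Fin n → ℝ) (hx : ∀ i, 0 ≤ x i) (hx1 : ∀ i, x i ≤ 1) :
    ∃ y : Fin n → ℕ → ℝ, (∀ i b, 0 ≤ y i b) ∧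
      (∀ i, ∑ b ∈ range n, y i b = x i) ∧ (∀ b, ∑ i, y i b ≤ 1) ∧
      ∀ i b, y i (b + 1) ≠ 0 → s i ≤ ∑ k, s k * y k b := by
  set σ := Tuple.sort (fun i => - s i)
  have hm : Monotone ((fun i => - s i) ∘ σ) := Tuple.monotone_sort _
  obtain ⟨y, h1, h2, h3, h4⟩ := bucket_sorted n (x ∘ σ) (s ∘ σ) (fun i => hx _) (fun i => hx1 _)
    (fun a b h => by have := hm h; simp only [Function.comp] at this ⊢; linarith)
  refine ⟨fun i b => y (σ.symm i) b, fun i b => h1 _ _, fun i => ?_, fun b => ?_, fun i b hb => ?_⟩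
  · simpa using h2 (σ.symm i)
  · rw [Equiv.sum_comp σ.symm (fun i => y i b)]
    exact h3 b
  · have := h4 _ b hb
    simp only [Function.comp, Equiv.apply_symm_apply] at this
    refine this.trans_eq ?_
    rw [← Equiv.sum_comp σ.symm]
    simp

theorem substoch {I Q : Type*} [Fintype I] [Fintype Q] [DecidableEq I] [DecidableEq Q]
    (Y : I → Q → ℝ) (h0 : ∀ i q, 0 ≤ Y i q) (hr : ∀ i, ∑ q, Y i q ≤ 1) (hc : ∀ q, ∑ i, Y i q ≤ 1) :
    ∃ w : Equiv.Perm (I ⊕ Q) → ℝ, (∀ σ, 0 ≤ w σ) ∧ ∑ σ, w σ = 1 ∧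
      ∀ i q, ∑ σ, w σ * (if σ (Sum.inl i) = Sum.inr q then 1 else 0) = Y i q := by
  set M : Matrix (I ⊕ Q) (I ⊕ Q) ℝ := Matrix.fromBlocks
    (Matrix.diagonal fun i => 1 - ∑ q, Y i q) (Matrix.of Y) (Matrix.of Y).transpose
    (Matrix.diagonal fun q => 1 - ∑ i, Y i q) with hM
  have hds : M ∈ doublyStochastic ℝ (I ⊕ Q) := by
    rw [mem_doublyStochastic_iff_sum]
    refine ⟨?_, ?_, ?_⟩
    · rintro (i | q) (i' | q')
      · simp only [hM, Matrix.fromBlocks_apply₁₁, Matrix.diagonal_apply]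
        split_ifs
        · linarith [hr i]
        · exact le_rfl
      · exact h0 _ _
      · exact h0 _ _
      · simp only [hM, Matrix.fromBlocks_apply₂₂, Matrix.diagonal_apply]
        split_ifs
        · linarith [hc q]
        · exact le_rfl
    · rintro (i | q) <;> simp [hM, Matrix.diagonal_apply]
    · rintro (i | q) <;> simp [hM, Matrix.diagonal_apply]
  obtain ⟨w, hw0, hw1, hw⟩ := exists_eq_sum_perm_of_mem_doublyStochastic hds
  refine ⟨w, hw0, hw1, fun i q => ?_⟩
  have := congrFun (congrFun hw (Sum.inl i)) (Sum.inr q)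
  rw [Matrix.sum_apply] at this
  simp only [Matrix.smul_apply, smul_eq_mul, hM, Matrix.fromBlocks_apply₁₂, Matrix.of_apply] at this
  rw [← this]
  refine sum_congr rfl fun σ _ => ?_
  congr 1
  simp [Equiv.Perm.permMatrix, PEquiv.toMatrix_apply, eq_comm]


/-- The assignment read off a permutation and a coin. -/
def asg {n m : ℕ} (w : Equiv.Perm (Fin n ⊕ (Fin m × Fin n)) × Bool) (i : Fin n) : Option (Fin m) :=
  Sum.elim (fun _ => none) (fun q => if decide (q.2.val = 0) = w.2 then some q.1 else none)
    (w.1 (Sum.inl i))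

theorem asg_eq_some {w : Equiv.Perm (Fin n ⊕ (Fin m × Fin n)) × Bool} {i : Fin n} {j : Fin m} :
    asg w i = some j ↔ ∃ b : Fin n, w.1 (Sum.inl i) = Sum.inr (j, b) ∧ decide (b.val = 0) = w.2 := by
  unfold asg
  rcases h : w.1 (Sum.inl i) with k | ⟨j', b'⟩
  · simp
  · simp only [Sum.elim_inr, Sum.inr.injEq, Prod.mk.injEq]
    constructor
    · intro h
      split_ifs at h with h'
      exact ⟨b', ⟨by simpa using h, rfl⟩, h'⟩
    · rintro ⟨b, ⟨rfl, rfl⟩, h⟩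
      rw [if_pos h]

theorem rounding {s : Fin n × Fin m → ℝ} {c : Fin m → ℝ} (hs : ∀ p, 0 < s p) (hc : ∀ j, 0 ≤ c j)
    (E : Finset (Fin n × Fin m)) (x : Fin n × Fin m → ℝ) (hx : Feas s c x)
    (hsupp : ∀ e, x e ≠ 0 → e ∈ E ∧ s e ≤ c e.2) :
    ∃ p : (Fin n → Option (Fin m)) → ℝ, (∀ a, 0 ≤ p a) ∧ ∑ a, p a = 1 ∧
      (∀ a, p a ≠ 0 → VIGAPFeasible s c E a) ∧
      ∀ i j, ∑ a, p a * (if a i = some j then 1 else 0) = x (i, j) / 2 := by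
  classical
  have hx1 : ∀ i j, x (i, j) ≤ 1 := fun i j => by
    refine le_trans ?_ (hx.row i)
    simp only [Rw, Rg, one_mul]
    exact Finset.single_le_sum (f := fun j => x (i, j)) (fun j _ => hx.nn _) (Finset.mem_univ j)
  choose y y0 yx y1 ys using fun j => bucket n (fun i => x (i, j)) (fun i => s (i, j))
    (fun i => hx.nn _) (fun i => hx1 i j)
  have yF : ∀ i j, ∑ b : Fin n, y j i b = x (i, j) := fun i j => by
    rw [← yx j i, Finset.sum_range]
  obtain ⟨w, w0, w1, wY⟩ := substoch (I := Fin n) (Q := Fin m × Fin n)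
    (fun i q => y q.1 i q.2) (fun i q => y0 _ _ _)
    (fun i => by
      rw [Fintype.sum_prod_type]
      simp only [yF]
      simpa [Rw, Rg] using hx.row i)
    (fun q => y1 _ _)
  have wpos : ∀ σ, w σ ≠ 0 → ∀ i j b, σ (Sum.inl i) = Sum.inr (j, b) → y j i b ≠ 0 := by
    intro σ hσ i j b h
    have h1 : 0 < w σ := lt_of_le_of_ne (w0 σ) hσ.symm
    have h2 := Finset.single_le_sum
      (f := fun σ => w σ * (if σ (Sum.inl i) = Sum.inr (j, b) then (1 : ℝ) else 0))
      (fun σ _ => mul_nonneg (w0 σ) (by split_ifs <;> norm_num)) (Finset.mem_univ σ)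
    rw [wY] at h2
    simp only [h, if_true, mul_one] at h2
    exact (h1.trans_le h2).ne'
  have yne : ∀ i j (b : Fin n), y j i b ≠ 0 → x (i, j) ≠ 0 := by
    intro i j b h h'
    rw [← yF i j, Finset.sum_eq_zero_iff_of_nonneg (fun b _ => y0 _ _ _)] at h'
    exact h (h' b (Finset.mem_univ b))
  have swap : ∀ f : (Fin n → Option (Fin m)) → ℝ,
      ∑ a, (∑ ω : Equiv.Perm (Fin n ⊕ (Fin m × Fin n)) × Bool,
        w ω.1 / 2 * (if asg ω = a then 1 else 0)) * f a =
      ∑ ω : Equiv.Perm (Fin n ⊕ (Fin m × Fin n)) × Bool, w ω.1 / 2 * f (asg ω) := by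
    intro f
    simp only [Finset.sum_mul]
    rw [Finset.sum_comm]
    refine Finset.sum_congr rfl fun ω _ => ?_
    rw [Finset.sum_eq_single (asg ω)]
    · simp
    · intro b _ hb
      simp [hb.symm]
    · simp
  refine ⟨fun a => ∑ ω : Equiv.Perm (Fin n ⊕ (Fin m × Fin n)) × Bool,
    w ω.1 / 2 * (if asg ω = a then 1 else 0), ?_, ?_, ?_, ?_⟩
  · intro a
    exact Finset.sum_nonneg fun ω _ => mul_nonneg (by linarith [w0 ω.1]) (by split_ifs <;> norm_num)
  · have := swap (fun _ => 1)
    simp only [mul_one] at this ⊢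
    rw [this, Fintype.sum_prod_type]
    simp only [Finset.sum_const, Finset.card_univ, Fintype.card_bool]
    rw [← w1]
    exact Finset.sum_congr rfl fun σ _ => by simp; ring
  · intro a ha
    obtain ⟨⟨σ, ε⟩, -, hω⟩ := Finset.exists_ne_zero_of_sum_ne_zero ha
    have hwσ : w σ ≠ 0 := by
      intro h; simp [h] at hω
    have haeq : asg (σ, ε) = a := by
      by_contra h; simp [h] at hω
    subst haeq
    have hjob : ∀ i j, asg (σ, ε) i = some j → (i, j) ∈ E ∧ s (i, j) ≤ c j := by
      intro i j h
      obtain ⟨b, hb, -⟩ := asg_eq_some.1 h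
      exact hsupp _ (yne i j b (wpos σ hwσ i j b hb))
    refine ⟨fun i j h => (hjob i j h).1, fun j => ?_⟩
    set S := Finset.univ.filter (fun i => asg (σ, ε) i = some j) with hS
    have hbk : ∀ i : Fin n, ∃ b : ℕ, i ∈ S → ∃ b' : Fin n, b'.val = b ∧
        σ (Sum.inl i) = Sum.inr (j, b') ∧ decide (b = 0) = ε := by
      intro i
      by_cases hi : i ∈ S
      · obtain ⟨b, hb, h'⟩ := asg_eq_some.1 (Finset.mem_filter.1 hi).2
        exact ⟨b, fun _ => ⟨b, rfl, hb, h'⟩⟩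
      · exact ⟨0, fun h => absurd h hi⟩
    choose β hβ using hbk
    have hinj : Set.InjOn β S := by
      intro i hi k hk h
      obtain ⟨b, hb, h1, -⟩ := hβ i hi
      obtain ⟨b', hb', h2, -⟩ := hβ k hk
      have : b = b' := Fin.ext (by rw [hb, hb', h])
      subst this
      exact Sum.inl_injective (σ.injective (h1.trans h2.symm))
    cases ε with
    | true =>
      have h0 : ∀ i ∈ S, β i = 0 := fun i hi => by
        obtain ⟨b, _, _, h⟩ := hβ i hi
        simpa using h
      rcases S.eq_empty_or_nonempty with h | ⟨i, hi⟩
      · rw [h]; simpa using hc j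
      · have : S = {i} := by
          refine Finset.eq_singleton_iff_unique_mem.2 ⟨hi, fun k hk => ?_⟩
          exact hinj hk hi ((h0 k hk).trans (h0 i hi).symm)
        rw [this, Finset.sum_singleton]
        exact (hjob i j (Finset.mem_filter.1 hi).2).2
    | false =>
      have h0 : ∀ i ∈ S, β i ≠ 0 := fun i hi => by
        obtain ⟨b, _, _, h⟩ := hβ i hi
        simpa using h
      have hlt : ∀ i ∈ S, β i < n := fun i hi => by
        obtain ⟨b, h, _, _⟩ := hβ i hi
        rw [← h]; exact b.2
      have hle : ∀ i ∈ S, s (i, j) ≤ ∑ k, s (k, j) * y j k (β i - 1) := by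
        intro i hi
        refine ys j i (β i - 1) ?_
        rw [Nat.sub_add_cancel (Nat.one_le_iff_ne_zero.2 (h0 i hi))]
        obtain ⟨b, h, h', _⟩ := hβ i hi
        rw [← h]
        exact wpos σ hwσ i j b h'
      calc ∑ i ∈ S, s (i, j) ≤ ∑ i ∈ S, ∑ k, s (k, j) * y j k (β i - 1) := Finset.sum_le_sum hle
        _ = ∑ b ∈ S.image (fun i => β i - 1), ∑ k, s (k, j) * y j k b := by
          rw [Finset.sum_image]
          intro i hi k hk h
          have h1 := h0 i hi
          have h2 := h0 k hk
          simp only at h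
          exact hinj hi hk (by omega)
        _ ≤ ∑ b ∈ Finset.range n, ∑ k, s (k, j) * y j k b := by
          refine Finset.sum_le_sum_of_subset_of_nonneg ?_ fun b _ _ =>
            Finset.sum_nonneg fun k _ => mul_nonneg (hs _).le (y0 _ _ _)
          intro b hb
          obtain ⟨i, hi, rfl⟩ := Finset.mem_image.1 hb
          exact Finset.mem_range.2 ((Nat.sub_le _ _).trans_lt (hlt i hi))
        _ = Lg s x j := by
          rw [Finset.sum_comm]
          refine Finset.sum_congr rfl fun k _ => ?_
          rw [← Finset.mul_sum, yx]
        _ ≤ c j := hx.ld j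
  · intro i j
    rw [swap (fun a => if a i = some j then 1 else 0), Fintype.sum_prod_type, ← yF i j]
    have h1 : ∀ b : Fin n, y j i b =
        ∑ σ, w σ * (if σ (Sum.inl i) = Sum.inr (j, b) then 1 else 0) := fun b => (wY i (j, b)).symm
    simp only [h1]
    rw [Finset.sum_comm (s := (Finset.univ : Finset (Fin n))), Finset.sum_div]
    refine Finset.sum_congr rfl fun σ _ => ?_
    simp only [Fintype.sum_bool, asg]
    obtain ⟨t, h⟩ : ∃ t, σ (Sum.inl i) = t := ⟨_, rfl⟩
    rcases t with k | ⟨j', b'⟩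
    · simp [h]
    · by_cases hj : j' = j
      · by_cases hb : b'.val = 0 <;> simp [h, hj, hb]
      · by_cases hb : b'.val = 0 <;> simp [h, hj, hb]

theorem expect_val {E : Finset (Fin n × Fin m)} {p : (Fin n → Option (Fin m)) → ℝ}
    {x : Fin n × Fin m → ℝ} {v : Fin n → ℝ}
    (hp : ∀ i j, ∑ a, p a * (if a i = some j then 1 else 0) = x (i, j) / 2) (i : Fin n) :
    ∑ a, p a * ∑ j ∈ Finset.univ.filter (fun j => (i, j) ∈ E ∧ a i = some j), v i
      = v i * Rg (ind E) x i / 2 := by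
  have h1 : ∀ a : Fin n → Option (Fin m),
      p a * ∑ j ∈ Finset.univ.filter (fun j => (i, j) ∈ E ∧ a i = some j), v i =
      ∑ j, v i * (ind E (i, j) * (p a * (if a i = some j then 1 else 0))) := by
    intro a
    rw [Finset.sum_filter, Finset.mul_sum]
    refine Finset.sum_congr rfl fun j _ => ?_
    by_cases h : (i, j) ∈ E <;> by_cases h' : a i = some j <;> simp [ind, h, h', mul_comm]
  rw [Finset.sum_congr rfl fun a _ => h1 a, Finset.sum_comm]
  simp only [← Finset.mul_sum, hp, Rg]
  rw [mul_div_assoc, Finset.sum_div]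
  simp only [mul_div_assoc]

theorem expect_welfare {p : (Fin n → Option (Fin m)) → ℝ}
    {x : Fin n × Fin m → ℝ} {v : Fin n → ℝ}
    (hp : ∀ i j, ∑ a, p a * (if a i = some j then 1 else 0) = x (i, j) / 2) :
    ∑ a, p a * VIGAPWelfare v a = (∑ i, v i * Rw x i) / 2 := by
  have h1 : ∀ a : Fin n → Option (Fin m), p a * VIGAPWelfare v a =
      ∑ i, p a * ∑ j ∈ Finset.univ.filter
        (fun j => (i, j) ∈ (Finset.univ : Finset (Fin n × Fin m)) ∧ a i = some j), v i := by
    intro a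
    rw [VIGAPWelfare, Finset.sum_filter, Finset.mul_sum]
    refine Finset.sum_congr rfl fun i _ => ?_
    congr 1
    rcases h : a i with _ | j
    · simp
    · simp [Finset.filter_eq]
  rw [Finset.sum_congr rfl fun a _ => h1 a, Finset.sum_comm, Finset.sum_div]
  refine Finset.sum_congr rfl fun i _ => ?_
  rw [expect_val hp i]
  simp [Rw, Rg, ind]

theorem approx {v : Fin n → ℝ} {s : Fin n × Fin m → ℝ} {c : Fin m → ℝ}
    (hv : ∀ i, 0 ≤ v i) (hs : ∀ p, 0 < s p) (hc : ∀ j, 0 ≤ c j) {E : Finset (Fin n × Fin m)}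
    {x : Fin n × Fin m → ℝ} (hx : Feas s c x)
    (hcov : ∀ e, e ∈ E → s e ≤ c e.2 → 1 ≤ Rw x e.1 ∨
        v e.1 / s e * c e.2 ≤ Lg (fun e => v e.1) x e.2)
    {z : Fin n → Option (Fin m)} (hz : VIGAPFeasible s c E z) :
    VIGAPWelfare v z ≤ 2 * ∑ i, v i * Rw x i := by
  have hV0 : ∀ j, 0 ≤ Lg (fun e => v e.1) x j := fun j =>
    Finset.sum_nonneg fun i _ => mul_nonneg (hv _) (hx.nn _)
  have hR0 : ∀ i, 0 ≤ Rw x i := fun i => by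
    unfold Rw Rg
    exact Finset.sum_nonneg fun j _ => mul_nonneg zero_le_one (hx.nn _)
  have hterm : ∀ i j, 0 ≤ if z i = some j then Lg (fun e => v e.1) x j * (s (i, j) / c j) else 0 := by
    intro i j
    split_ifs
    · exact mul_nonneg (hV0 j) (div_nonneg (hs _).le (hc j))
    · exact le_rfl
  have h1 : ∀ i, (if z i ≠ none then v i else 0) ≤ v i * Rw x i +
      ∑ j, if z i = some j then Lg (fun e => v e.1) x j * (s (i, j) / c j) else 0 := by
    intro i
    have hsum : 0 ≤ ∑ j, if z i = some j then Lg (fun e => v e.1) x j * (s (i, j) / c j) else 0 :=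
      Finset.sum_nonneg fun j _ => hterm i j
    have hvR := mul_nonneg (hv i) (hR0 i)
    rcases h : z i with _ | j
    · simpa [h] using hvR
    · have hsc : s (i, j) ≤ c j := by
        refine le_trans ?_ (hz.2 j)
        exact Finset.single_le_sum (f := fun i => s (i, j)) (fun i _ => (hs _).le)
          (by simp [h])
      have hcpos : 0 < c j := (hs _).trans_le hsc
      rw [h] at hsum
      rcases hcov (i, j) (hz.1 i j h) hsc with h' | h'
      · have := mul_le_mul_of_nonneg_left h' (hv i)
        simp only [mul_one] at this
        rw [if_pos (by simp)]
        linarith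
      · simp only [Option.some.injEq, Finset.sum_ite_eq, Finset.mem_univ, if_true]
        rw [if_pos (by simp)]
        have h3 : v i / s (i, j) * c j * (s (i, j) / c j) = v i := by
          have := (hs (i, j)).ne'
          have := hcpos.ne'
          field_simp
        have h4 := mul_le_mul_of_nonneg_right h' (div_nonneg (hs (i, j)).le hcpos.le)
        simp only at h4
        rw [h3] at h4
        linarith
  have h2 : ∀ j, (∑ i, if z i = some j then Lg (fun e => v e.1) x j * (s (i, j) / c j) else 0) ≤
      Lg (fun e => v e.1) x j := by
    intro j
    rw [← Finset.sum_filter, ← Finset.mul_sum, ← Finset.sum_div]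
    exact mul_le_of_le_one_right (hV0 j) (div_le_one_of_le₀ (hz.2 j) (hc j))
  have h3 : ∑ j, Lg (fun e => v e.1) x j = ∑ i, v i * Rw x i := by
    simp only [Lg, Rw, Rg, one_mul, Finset.mul_sum]
    rw [Finset.sum_comm]
  calc VIGAPWelfare v z = ∑ i, (if z i ≠ none then v i else 0) := by
        rw [VIGAPWelfare, Finset.sum_filter]
    _ ≤ ∑ i, (v i * Rw x i +
      ∑ j, if z i = some j then Lg (fun e => v e.1) x j * (s (i, j) / c j) else 0) :=
        Finset.sum_le_sum fun i _ => h1 i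
    _ = ∑ i, v i * Rw x i + ∑ j, ∑ i,
        (if z i = some j then Lg (fun e => v e.1) x j * (s (i, j) / c j) else 0) := by
        rw [Finset.sum_add_distrib]
        congr 1
        exact Finset.sum_comm
    _ ≤ ∑ i, v i * Rw x i + ∑ j, Lg (fun e => v e.1) x j := by
        gcongr with j _
        exact h2 j
    _ = 2 * ∑ i, v i * Rw x i := by rw [h3]; ring

end VG

/-- There is a 4-approximate, truthful-in-expectation mechanism without money
for the value-invariant generalized assignment problem in the private graph model. -/
theorem stmt16 (n m : ℕ) (v : Fin n → ℝ) (s : Fin n × Fin m → ℝ) (c : Fin m → ℝ)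
    (hv : ∀ i, 0 ≤ v i) (hs : ∀ p, 0 < s p) (hc : ∀ j, 0 ≤ c j) :
    ∃ A : Finset (Fin n × Fin m) → (Fin n → Option (Fin m)) → ℝ,
      (∀ E x, 0 ≤ A E x) ∧
      (∀ E, ∑ x : Fin n → Option (Fin m), A E x = 1) ∧
      (∀ E x, A E x ≠ 0 → VIGAPFeasible s c E x) ∧
      (∀ (E Ei' : Finset (Fin n × Fin m)) (i : Fin n), (∀ e ∈ Ei', e.1 = i) →
        ∑ x : Fin n → Option (Fin m),
            A ((E \ E.filter (fun e => e.1 = i)) ∪ Ei') x *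
              ∑ j ∈ Finset.univ.filter (fun j => (i, j) ∈ E ∧ x i = some j), v i
          ≤ ∑ x : Fin n → Option (Fin m),
              A E x * ∑ j ∈ Finset.univ.filter (fun j => (i, j) ∈ E ∧ x i = some j), v i) ∧
      (∀ E z, VIGAPFeasible s c E z →
        VIGAPWelfare v z ≤ 4 * ∑ x : Fin n → Option (Fin m), A E x * VIGAPWelfare v x) := by
  obtain ⟨X, hX, hsupp, htruth, hcov⟩ := VG.frac v s c hv hs hc
  choose A A0 A1 Af Am using fun E => VG.rounding hs hc E (X E) (hX E) (hsupp E)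
  refine ⟨A, A0, A1, Af, ?_, ?_⟩
  · intro E Ei' i hE
    rw [VG.expect_val (Am _), VG.expect_val (Am _)]
    have := htruth E ((E \ E.filter (fun e => e.1 = i)) ∪ Ei') i (by
      intro e he
      have h1 : e ∉ Ei' := fun h => he (hE e h)
      simp [he, h1])
    linarith
  · intro E z hz
    rw [VG.expect_welfare (Am E)]
    have := VG.approx hv hs hc (hX E) (hcov E) hz
    linarith
end
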